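/- arXiv:1103.4740 — 2 statements merged into one kernel-verified Lean document; each statement's English description precedes it below -/
import Mathlib

section
/- Let A be a domain with quotient field L of characteristic 0 which is integrally closed in L and finitely generated over ℤ as a ℤ-algebra, and let K be an extension of L of degree 3. Then every two times monogenic A-order in K is of type I. -/
/-- Two elements `α, β` of the integral closure of `A` in `K` are `A`-equivalent if
`β = u·α + a` for some unit `u ∈ Aˣ` and some `a ∈ A`. -/
def AEquiv (A K : Type*) [CommRing A] [CommRing K] [Algebra A K] (α β : K) : Prop :=
  ∃ (u : Aˣ) (a : A), β = algebraMap A K u * α + algebraMap A K a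

/-- An `A`-order in `K`: a subring `O` of the integral closure `A_K` of `A` in `K`
which contains `A` and has quotient field `K`. -/
def IsAOrder (A K : Type*) [CommRing A] [Field K] [Algebra A K] (O : Subalgebra A K) : Prop :=
  O ≤ integralClosure A K ∧ ∀ x : K, ∃ a ∈ O, ∃ b ∈ O, b ≠ 0 ∧ x = a / b

/-- An `A`-order `O` is `k` times monogenic if there are at least `k` pairwise
`A`-inequivalent elements `α ∈ O` with `A[α] = O`. -/
def TimesMonogenic (A K : Type*) [CommRing A] [CommRing K] [Algebra A K]
    (k : ℕ) (O : Subalgebra A K) : Prop :=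
  ∃ f : Fin k → K, (∀ i j, i ≠ j → ¬ AEquiv A K (f i) (f j)) ∧
    ∀ i, Algebra.adjoin A {f i} = O

/-- An `A`-order `O` in `K` (with `[K:L] ≥ 3`) is of type I if there are `α, β ∈ O` and
a matrix `(a1 a2; a3 a4) ∈ GL(2, L)` such that `K = L(α)`, `O = A[α] = A[β]`,
`β = (a1·α + a2)/(a3·α + a4)` and `a3 ≠ 0`. -/
def IsTypeI (A L K : Type*) [CommRing A] [Field L] [Field K] [Algebra A K] [Algebra L K]
    (O : Subalgebra A K) : Prop :=
  ∃ α β : K, α ∈ O ∧ β ∈ O ∧ ∃ M : Matrix (Fin 2) (Fin 2) L, IsUnit M.det ∧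
    Algebra.adjoin L {α} = ⊤ ∧
    Algebra.adjoin A {α} = O ∧ Algebra.adjoin A {β} = O ∧
    M 1 0 ≠ 0 ∧
    algebraMap L K (M 1 0) * α + algebraMap L K (M 1 1) ≠ 0 ∧
    β = (algebraMap L K (M 0 0) * α + algebraMap L K (M 0 1)) /
        (algebraMap L K (M 1 0) * α + algebraMap L K (M 1 1))

/-- Every element of `A[α]` is a polynomial of degree at most two in `α`. -/
lemma exists_quadratic_repr
    (A : Type*) [CommRing A] [IsDomain A] [IsIntegrallyClosed A]
    (L : Type*) [Field L] [Algebra A L] [IsFractionRing A L]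
    (K : Type*) [Field K] [Algebra L K]
    [Algebra A K] [IsScalarTower A L K] (α : K) (hα : IsIntegral A α)
    (hdeg : (minpoly L α).natDegree = 3) (x : K) (hx : x ∈ Algebra.adjoin A {α}) :
    ∃ p q r : A, x = algebraMap A K p + algebraMap A K q * α + algebraMap A K r * α ^ 2 := by
  have hm : (minpoly A α).Monic := minpoly.monic hα
  have hd3 : (minpoly A α).natDegree = 3 := by
    rw [← hdeg, minpoly.isIntegrallyClosed_eq_field_fractions' L hα, hm.natDegree_map]
  rw [Algebra.adjoin_singleton_eq_range_aeval] at hx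
  obtain ⟨f, rfl⟩ := hx
  have hlt : (f %ₘ minpoly A α).natDegree < 3 := by
    rw [← hd3]
    apply Polynomial.natDegree_modByMonic_lt _ hm
    intro h1
    rw [h1] at hd3
    simp at hd3
  have he : Polynomial.aeval α (f %ₘ minpoly A α) = Polynomial.aeval α f :=
    Polynomial.aeval_modByMonic_eq_self_of_root (minpoly.aeval A α)
  refine ⟨(f %ₘ minpoly A α).coeff 0, (f %ₘ minpoly A α).coeff 1,
    (f %ₘ minpoly A α).coeff 2, ?_⟩
  change Polynomial.aeval α f = _
  rw [← he, Polynomial.aeval_eq_sum_range' hlt]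
  simp [Finset.sum_range_succ, Algebra.smul_def]

/-- A generator of degree three has `1, α, α²` linearly independent. -/
lemma quadratic_indep (L K : Type*) [Field L] [Field K] [Algebra L K] (α : K)
    (hdeg : (minpoly L α).natDegree = 3) (a b c : L)
    (h : algebraMap L K a + algebraMap L K b * α + algebraMap L K c * α ^ 2 = 0) :
    a = 0 ∧ b = 0 ∧ c = 0 := by
  have hli := linearIndependent_pow (K := L) α
  rw [hdeg, Fintype.linearIndependent_iff] at hli
  have := hli ![a, b, c] (by simpa [Fin.sum_univ_succ, Algebra.smul_def, add_assoc] using h)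
  exact ⟨this 0, this 1, this 2⟩

/-- A generator of an order generates the field. -/
lemma order_generator (A : Type*) [CommRing A]
    (L : Type*) [Field L] [CharZero L] [Algebra A L]
    (K : Type*) [Field K] [Algebra L K] [FiniteDimensional L K]
    [Algebra A K] [IsScalarTower A L K]
    (hd : Module.finrank L K = 3)
    (O : Subalgebra A K) (hO : IsAOrder A K O) (α : K) (h : Algebra.adjoin A {α} = O) :
    Algebra.adjoin L {α} = ⊤ ∧ (minpoly L α).natDegree = 3 ∧ IsIntegral A α ∧ α ∈ O := by
  have hmem : α ∈ O := h ▸ Algebra.self_mem_adjoin_singleton A α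
  have hsub : ∀ x ∈ O, x ∈ IntermediateField.adjoin L {α} := by
    intro x hx
    have hle : O ≤ (IntermediateField.adjoin L {α}).toSubalgebra.restrictScalars A := by
      rw [← h]
      apply Algebra.adjoin_le
      rintro y rfl
      exact IntermediateField.mem_adjoin_simple_self L y
    exact hle hx
  have htop : IntermediateField.adjoin L {α} = ⊤ := by
    rw [eq_top_iff]
    intro x _
    obtain ⟨a, ha, b, hb, _, rfl⟩ := hO.2 x
    exact div_mem (hsub a ha) (hsub b hb)
  refine ⟨?_, ?_, hO.1 hmem, hmem⟩
  · rw [← IntermediateField.adjoin_simple_toSubalgebra_of_isAlgebraic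
      (Algebra.IsAlgebraic.isAlgebraic α), htop]
    rfl
  · rw [← hd]
    exact (Field.primitive_element_iff_minpoly_natDegree_eq L α).1 htop

/-- Let `A` be a domain with quotient field `L` of characteristic 0, integrally closed
and finitely generated over ℤ, and let `K` be an extension of `L` of degree 3. Then
every two times monogenic `A`-order in `K` is of type I. -/
theorem cubic_two_times_monogenic_A_order_is_typeI
    (A : Type*) [CommRing A] [IsDomain A] [IsIntegrallyClosed A] [Algebra.FiniteType ℤ A]
    (L : Type*) [Field L] [CharZero L] [Algebra A L] [IsFractionRing A L]
    (K : Type*) [Field K] [Algebra L K] [FiniteDimensional L K]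
    [Algebra A K] [IsScalarTower A L K]
    (hd : Module.finrank L K = 3)
    (O : Subalgebra A K) (hO : IsAOrder A K O) (h2 : TimesMonogenic A K 2 O) :
    IsTypeI A L K O := by
  obtain ⟨f, hne, hf⟩ := h2
  have hneq := hne 0 1 (by decide)
  have hα := hf 0
  have hβ := hf 1
  generalize f 0 = α at *
  generalize f 1 = β at *
  obtain ⟨hαt, hαd, hαi, hαO⟩ := order_generator A L K hd O hO α hα
  obtain ⟨hβt, hβd, hβi, hβO⟩ := order_generator A L K hd O hO β hβ
  obtain ⟨p, q, r, hpqr⟩ := exists_quadratic_repr A L K α hαi hαd β (hα ▸ hβO)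
  obtain ⟨s, t, u, hstu⟩ := exists_quadratic_repr A L K β hβi hβd α (hβ ▸ hαO)
  obtain ⟨c0, c1, c2, hc⟩ := exists_quadratic_repr A L K α hαi hαd (α ^ 3)
    (hα ▸ pow_mem hαO 3)
  have hinj : Function.Injective (algebraMap A L) := IsFractionRing.injective A L
  have hnL : ∀ (γ : K), (minpoly L γ).natDegree = 3 → ∀ y : L, γ ≠ algebraMap L K y := by
    intro γ hγ y hy
    have := (quadratic_indep L K γ hγ (-y) 1 0 (by rw [hy]; simp)).2.1
    exact one_ne_zero this
  have hr : r ≠ 0 := by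
    rintro rfl
    have hβ1 : β = algebraMap A K p + algebraMap A K q * α := by simpa using hpqr
    simp only [IsScalarTower.algebraMap_apply A L K] at hβ1 hstu
    have h3 := quadratic_indep L K α hαd
      (algebraMap A L (s + t * p + u * p ^ 2)) (algebraMap A L (t * q + 2 * u * p * q - 1))
      (algebraMap A L (u * q ^ 2)) (by
        rw [hβ1] at hstu
        simp only [map_add, map_mul, map_sub, map_pow, map_one, map_ofNat]
        linear_combination -hstu)
    obtain ⟨-, h1, h2⟩ := h3
    rw [map_eq_zero_iff _ hinj] at h1 h2
    have hq : q ≠ 0 := by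
      rintro rfl
      exact hnL β hβd (algebraMap A L p) (by simpa using hβ1)
    have hu : u = 0 := by
      rcases mul_eq_zero.1 h2 with h | h
      · exact h
      · exact absurd (pow_eq_zero_iff (two_ne_zero) |>.1 h) hq
    subst hu
    have htq : q * t = 1 := by linear_combination h1
    refine hneq ⟨⟨q, t, htq, by rw [mul_comm]; exact htq⟩, p, ?_⟩
    simp only [IsScalarTower.algebraMap_apply A L K]
    rw [hβ1]; ring
  have hrK : algebraMap A K r ≠ 0 := by
    rw [IsScalarTower.algebraMap_apply A L K]
    simpa using (map_ne_zero_iff _ hinj).2 hr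
  -- `αβ = x + yα + zβ`
  obtain ⟨x, y, z, hxyz⟩ : ∃ x y z : L, α * β =
      algebraMap L K x + algebraMap L K y * α + algebraMap L K z * β := by
    let i := algebraMap A L
    refine ⟨i r * i c0 - (i q + i r * i c2) / i r * i p,
      i p + i r * i c1 - (i q + i r * i c2) / i r * i q, (i q + i r * i c2) / i r, ?_⟩
    simp only [map_add, map_mul, map_sub, map_div₀, i,
      ← IsScalarTower.algebraMap_apply A L K]
    field_simp
    rw [hpqr]
    linear_combination (algebraMap A K r) ^ 2 * hc
  have hden : α - algebraMap L K z ≠ 0 := fun h => hnL α hαd z (sub_eq_zero.1 h)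
  refine ⟨α, β, hαO, hβO, !![y, x; 1, -z], ?_, hαt, hα, hβ, ?_, ?_, ?_⟩
  · rw [isUnit_iff_ne_zero, Matrix.det_fin_two_of]
    intro h0
    have hx : x = -(y * z) := by linear_combination -h0
    have : (β - algebraMap L K y) * (α - algebraMap L K z) = 0 := by
      rw [hx] at hxyz
      simp only [map_neg, map_mul] at hxyz
      linear_combination hxyz
    rcases mul_eq_zero.1 this with h | h
    · exact hnL β hβd y (sub_eq_zero.1 h)
    · exact hden h
  · simp
  · simpa [← sub_eq_add_neg] using hden
  · have : β = (algebraMap L K y * α + algebraMap L K x) / (α - algebraMap L K z) := by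
      rw [eq_div_iff hden]
      linear_combination hxyz
    simpa [← sub_eq_add_neg] using this
end

section
/- Let A be an integrally closed domain with quotient field L of characteristic 0 which is finitely generated over ℤ as a ℤ-algebra, K a finite extension of L of degree at least 3, and C an L-equivalence class in K. Then the set of β ∈ A_K ∩ C with L(β) = K such that the A-order A[β] is two times monogenic is contained in a union of at most finitely many A-equivalence classes. -/
/-- Two elements `α, β` of `K` are `L`-equivalent if `β = u·α + a` for some `u ∈ L*`
and `a ∈ L`. -/
def LEquiv (L K : Type*) [Field L] [Field K] [Algebra L K] (α β : K) : Prop :=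
  ∃ u a : L, u ≠ 0 ∧ β = algebraMap L K u * α + algebraMap L K a

section P1
open Polynomial

noncomputable def padeW {K : Type*} [Field K] (l m n : ℕ) (X Z : K) : K :=
  ∑ j ∈ Finset.range (n + 1), ((Nat.choose (l + j) j * Nat.choose (l + m + n + 1) (n - j) : ℕ) : K)
    * X ^ j * Z ^ (n - j)

lemma exists_beta_poly {K : Type*} [Field K] [CharZero K] (m : ℕ) : ∀ p : ℕ, ∃ B : K[X],
    derivative B = X ^ p * (X - 1) ^ m ∧
    ((p + m + 1).factorial : K) * (B.eval 1 - B.eval 0) = (-1) ^ m * p.factorial * m.factorial := by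
  induction m with
  | zero =>
    intro p
    have hp : (p + 1 : K) ≠ 0 := by exact_mod_cast Nat.succ_ne_zero p
    refine ⟨C ((p + 1 : K)⁻¹) * X ^ (p + 1), ?_, ?_⟩
    · rw [derivative_C_mul, derivative_X_pow]
      push_cast
      rw [← mul_assoc, ← C_mul, inv_mul_cancel₀ hp]
      simp
    · simp [Nat.factorial_succ]
      field_simp
  | succ m ih =>
    intro p
    obtain ⟨B, hB, hB'⟩ := ih (p + 1)
    have hp : (p + 1 : K) ≠ 0 := by exact_mod_cast Nat.succ_ne_zero p
    have hC : (C ((p + 1 : K)⁻¹) * (C (p : K) + 1) : K[X]) = 1 := by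
      rw [show (C (p:K) + 1 : K[X]) = C (p + 1 : K) by simp, ← C_mul, inv_mul_cancel₀ hp]; simp
    refine ⟨C ((p + 1 : K)⁻¹) * (X ^ (p + 1) * (X - 1) ^ (m + 1) - C (m + 1 : K) * B), ?_, ?_⟩
    · rw [derivative_C_mul, derivative_sub, derivative_mul, derivative_C_mul, hB, derivative_X_pow]
      have : derivative ((X - 1 : K[X]) ^ (m + 1)) = (C (m : K) + 1) * (X - 1) ^ m := by
        rw [show (X - 1 : K[X]) = X - C 1 by simp, derivative_X_sub_C_pow]; simp
      rw [this]
      simp only [Nat.add_sub_cancel, C_add, C_1, Nat.cast_add, Nat.cast_one]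
      linear_combination (X ^ p * (X - 1) ^ (m + 1)) * hC
    · simp only [eval_mul, eval_C, eval_sub, eval_pow, eval_X, eval_one, sub_self, ne_eq, Nat.add_eq_zero_iff,
        one_ne_zero, and_false, not_false_eq_true, zero_pow, mul_zero, zero_mul, zero_sub]
      rw [show p + (m + 1) + 1 = p + 1 + m + 1 by ring]
      have e : ((p + 1).factorial : K) = (p + 1) * p.factorial := by
        rw [Nat.factorial_succ]; push_cast; ring
      have e' : ((m + 1).factorial : K) = (m + 1) * m.factorial := by
        rw [Nat.factorial_succ]; push_cast; ring
      rw [e] at hB'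
      rw [e']
      field_simp
      linear_combination (-1 : K) * hB'

lemma pade_coeff {K : Type*} [Field K] [CharZero K] (l m n j : ℕ) (hj : j ≤ n) :
    ((l + m + n + 1).factorial : K) * (n.choose j) * ((l + j).factorial * m.factorial) =
    (l.factorial * m.factorial * n.factorial : K) * (l + j + m + 1).factorial *
      ((Nat.choose (l + j) j * Nat.choose (l + m + n + 1) (n - j) : ℕ) : K) := by
  have h1 : n.choose j * j.factorial * (n - j).factorial = n.factorial :=
    Nat.choose_mul_factorial_mul_factorial hj
  have h2 := Nat.choose_mul_factorial_mul_factorial (show j ≤ l + j by omega)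
  have h3 := Nat.choose_mul_factorial_mul_factorial (show n - j ≤ l + m + n + 1 by omega)
  rw [show l + m + n + 1 - (n - j) = l + j + m + 1 by omega] at h3
  rw [show l + j - j = l by omega] at h2
  have hf : (j.factorial : K) ≠ 0 := by exact_mod_cast j.factorial_ne_zero
  have hf2 : ((n-j).factorial : K) ≠ 0 := by exact_mod_cast (n-j).factorial_ne_zero
  have h1' : (n.choose j * j.factorial * (n - j).factorial : K) = n.factorial := by exact_mod_cast h1
  have h2' : ((l + j).choose j * j.factorial * l.factorial : K) = (l + j).factorial := by exact_mod_cast h2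
  have h3' : ((l + m + n + 1).choose (n - j) * (n - j).factorial * (l + j + m + 1).factorial : K)
    = (l + m + n + 1).factorial := by exact_mod_cast h3
  push_cast
  rw [← h1', ← h2', ← h3']
  ring

lemma eval_sub_eq_of_derivative_eq {K : Type*} [Field K] [CharZero K] {F G : K[X]}
    (h : derivative F = derivative G) (a b : K) : F.eval b - F.eval a = G.eval b - G.eval a := by
  have h0 : derivative (F - G) = 0 := by simp [h]
  have := Polynomial.derivative_eq_zero.1 h0
  obtain ⟨c, hc⟩ := Polynomial.natDegree_eq_zero.1 this
  have e : F = G + C c := by rw [hc]; ring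
  rw [e]; simp

lemma pade_int {K : Type*} [Field K] [CharZero K] (l m n : ℕ) (a b c : K) (F : K[X])
    (hF : derivative F = (X - C a) ^ l * (X - C b) ^ m * (X - C c) ^ n) :
    ((l + m + n + 1).factorial : K) * (F.eval b - F.eval a) =
      (-1) ^ m * (l.factorial * m.factorial * n.factorial) * ((b - a) ^ (l + m + 1) *
        padeW l m n (b - a) (a - c)) := by
  choose B hB hB' using fun p => exists_beta_poly (K := K) m p
  let G : K[X] := ∑ j ∈ Finset.range (n + 1),
    C ((b - a) ^ (l + m + 1) * (n.choose j * (b - a) ^ j * (a - c) ^ (n - j))) * B (l + j)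
  let F' : K[X] := F.comp (C a + C (b - a) * X)
  have hd : derivative F' = derivative G := by
    simp only [F', G, derivative_comp, hF, derivative_sum, derivative_C_mul, hB]
    simp only [derivative_add, derivative_C, zero_add, derivative_C_mul, derivative_X, mul_one,
      mul_comp, pow_comp, sub_comp, X_comp, C_comp]
    have e1 : (C a + C (b - a) * X - C a : K[X]) = C (b - a) * X := by ring
    have e2 : (C a + C (b - a) * X - C b : K[X]) = C (b - a) * (X - 1) := by simp; ring
    have e3 : (C a + C (b - a) * X - C c : K[X]) = C (b - a) * X + C (a - c) := by simp; ring
    rw [e1, e2, e3, add_pow, mul_pow _ _ m, Finset.mul_sum, Finset.mul_sum]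
    refine Finset.sum_congr rfl fun j hj => ?_
    simp only [C_mul, C_pow, map_natCast]
    ring
  have h := eval_sub_eq_of_derivative_eq hd 0 1
  have e1 : F'.eval 1 = F.eval b := by simp [F', eval_comp]
  have e0 : F'.eval 0 = F.eval a := by simp [F', eval_comp]
  rw [e1, e0] at h
  rw [h]
  simp only [G, eval_finsetSum, eval_mul, eval_C]
  rw [← Finset.sum_sub_distrib, padeW, Finset.mul_sum, Finset.mul_sum, Finset.mul_sum]
  refine Finset.sum_congr rfl fun j hj => ?_
  have hj' : j ≤ n := by simpa [Nat.lt_succ_iff] using hj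
  have hf : ((l + j + m + 1).factorial : K) ≠ 0 := by exact_mod_cast Nat.factorial_ne_zero _
  have h1 := pade_coeff (K := K) l m n j hj'
  have h2 := hB' (l + j)
  have h3 : (l + m + n + 1).factorial * (n.choose j : K) * (eval 1 (B (l + j)) - eval 0 (B (l + j)))
     = (-1) ^ m * (l.factorial * m.factorial * n.factorial : K) *
      ((Nat.choose (l + j) j * Nat.choose (l + m + n + 1) (n - j) : ℕ) : K) := by
    apply mul_left_cancel₀ hf
    linear_combination ((l + m + n + 1).factorial * (n.choose j : K)) * h2 + (-1) ^ m * h1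
  linear_combination ((b - a) ^ (l + m + 1) * ((b - a) ^ j * (a - c) ^ (n - j))) * h3
end P1

section P2
open Polynomial

noncomputable def padeVec1 {K : Type*} [Field K] (N : ℕ) (X Y Z : K) : Fin 3 → K :=
  ![padeW N N N X Z, padeW N N N Y X, padeW N N N Z Y]

noncomputable def padeVec2 {K : Type*} [Field K] (N : ℕ) (X Y Z : K) : Fin 3 → K :=
  ![X * padeW (N + 1) N N X Z, padeW N N (N + 1) Y X, - (Z * padeW N (N + 1) N Z Y)]

lemma exists_antideriv {K : Type*} [Field K] [CharZero K] (f : K[X]) : ∃ F : K[X], derivative F = f := by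
  induction f using Polynomial.induction_on' with
  | add p q hp hq =>
    obtain ⟨P, rfl⟩ := hp
    obtain ⟨Q, rfl⟩ := hq
    exact ⟨P + Q, by simp⟩
  | monomial n a =>
    refine ⟨monomial (n + 1) (a / (n + 1)), ?_⟩
    have hp : (n + 1 : K) ≠ 0 := by exact_mod_cast Nat.succ_ne_zero n
    rw [derivative_monomial]
    simp [hp]

lemma pow_succ_dvd_of_derivative {K : Type*} [Field K] [CharZero K] (G : K[X]) (a : K) (N : ℕ)
    (h0 : G.eval a = 0) (h : (X - C a) ^ N ∣ derivative G) : (X - C a) ^ (N + 1) ∣ G := by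
  by_cases hG : G = 0
  · simp [hG]
  have hr : G.IsRoot a := h0
  have hG' : derivative G ≠ 0 := by
    intro h1
    have := Polynomial.derivative_eq_zero.1 h1
    obtain ⟨c, rfl⟩ := Polynomial.natDegree_eq_zero.1 this
    simp at h0
    simp [h0] at hG
  have h1 := Polynomial.derivative_rootMultiplicity_of_root hr
  have h2 := (Polynomial.le_rootMultiplicity_iff hG').2 h
  have h3 : 0 < G.rootMultiplicity a := (Polynomial.rootMultiplicity_pos hG).2 hr
  exact (Polynomial.le_rootMultiplicity_iff hG).1 (by omega)

lemma pade_nonvanish {K : Type*} [Field K] [CharZero K] (N : ℕ) {a b c : K} (hab : a ≠ b)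
    (hbc : b ≠ c) (hca : c ≠ a) (p q : K) (F : K[X])
    (hF : derivative F = (C p + C q * (X - C a)) * ((X - C a) * (X - C b) * (X - C c)) ^ N)
    (h1 : F.eval b = F.eval a) (h2 : F.eval c = F.eval a) : p = 0 ∧ q = 0 := by
  let G := F - C (F.eval a)
  have hG : derivative G = (C p + C q * (X - C a)) * ((X - C a) * (X - C b) * (X - C c)) ^ N := by
    simp [G, hF]
  have hdvd : (X - C a) ^ (N + 1) * (X - C b) ^ (N + 1) * (X - C c) ^ (N + 1) ∣ G := by
    have cop : ∀ {s t : K}, s ≠ t → IsCoprime ((X - C s) ^ (N + 1)) ((X - C t) ^ (N + 1)) := fun h =>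
      (Polynomial.isCoprime_X_sub_C_of_isUnit_sub (sub_ne_zero.2 h).isUnit).pow
    refine IsCoprime.mul_dvd (IsCoprime.mul_left (cop hca.symm) (cop hbc))
      (IsCoprime.mul_dvd (cop hab) ?_ ?_) ?_
    · apply pow_succ_dvd_of_derivative _ _ _ (by simp [G])
      rw [hG]; exact ⟨(C p + C q * (X - C a)) * (X - C b) ^ N * (X - C c) ^ N, by rw [mul_pow, mul_pow]; ring⟩
    · apply pow_succ_dvd_of_derivative _ _ _ (by simp [G, h1])
      rw [hG]; exact ⟨(C p + C q * (X - C a)) * (X - C a) ^ N * (X - C c) ^ N, by rw [mul_pow, mul_pow]; ring⟩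
    · apply pow_succ_dvd_of_derivative _ _ _ (by simp [G, h2])
      rw [hG]; exact ⟨(C p + C q * (X - C a)) * (X - C a) ^ N * (X - C b) ^ N, by rw [mul_pow, mul_pow]; ring⟩
  have hG0 : G = 0 := by
    by_contra hne
    have hle := Polynomial.natDegree_le_of_dvd hdvd hne
    have hmon : ∀ s : K, ((X - C s) ^ (N + 1)).Monic := fun s => (monic_X_sub_C s).pow _
    rw [((hmon a).mul (hmon b)).natDegree_mul (hmon c), (hmon a).natDegree_mul (hmon b)] at hle
    simp only [natDegree_pow, natDegree_X_sub_C, mul_one] at hle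
    have hd := Polynomial.natDegree_derivative (p := G)
    have hub : (derivative G).natDegree ≤ 1 + (1 + 1 + 1) * N := by
      rw [hG]
      refine natDegree_mul_le.trans (add_le_add ?_ (natDegree_pow_le.trans ?_))
      · compute_degree
      · rw [mul_comm]
        gcongr
        refine natDegree_mul_le.trans (add_le_add (natDegree_mul_le.trans (add_le_add ?_ ?_)) ?_) <;>
        simp
    omega
  rw [hG0, derivative_zero] at hG
  have hne : ((X - C a) * (X - C b) * (X - C c)) ^ N ≠ 0 := by
    simp [X_sub_C_ne_zero]
  have h0 := (mul_eq_zero.1 hG.symm).resolve_right hne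
  have hp : p = 0 := by simpa using congrArg (eval a) h0
  refine ⟨hp, ?_⟩
  have := congrArg (eval (a + 1)) h0
  simpa [hp] using this

lemma pade_rel {K : Type*} [Field K] [CharZero K] (l m n : ℕ) {X Y Z : K} (hs : X + Y + Z = 0)
    (F : K[X]) (hF : derivative F = (Polynomial.X - C 0) ^ l * (Polynomial.X - C X) ^ m
      * (Polynomial.X - C (-Z)) ^ n) :
    ((l + m + n + 1).factorial : K) * (F.eval X - F.eval 0) =
      (-1) ^ m * (l.factorial * m.factorial * n.factorial) * (X ^ (l + m + 1) * padeW l m n X Z) ∧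
    ((l + m + n + 1).factorial : K) * (F.eval (-Z) - F.eval X) =
      (-1) ^ n * (l.factorial * m.factorial * n.factorial) * (Y ^ (m + n + 1) * padeW m n l Y X) ∧
    ((l + m + n + 1).factorial : K) * (F.eval 0 - F.eval (-Z)) =
      (-1) ^ l * (l.factorial * m.factorial * n.factorial) * (Z ^ (n + l + 1) * padeW n l m Z Y) := by
  have hY : -Z - X = Y := by linear_combination -hs
  have hY' : X - -Z = - Y := by linear_combination hs
  refine ⟨?_, ?_, ?_⟩
  · have := pade_int l m n 0 X (-Z) F hF
    simpa using this
  · have := pade_int m n l X (-Z) 0 F (by rw [hF]; ring)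
    rw [hY, sub_zero, show m + n + l + 1 = l + m + n + 1 by ring] at this
    rw [this]; ring
  · have := pade_int n l m (-Z) 0 X F (by rw [hF]; ring)
    rw [hY, show n + l + m + 1 = l + m + n + 1 by ring, zero_sub, neg_neg] at this
    rw [this]; ring

lemma padeVec1_rel {K : Type*} [Field K] [CharZero K] (N : ℕ) {X Y Z : K} (hs : X + Y + Z = 0) :
    X ^ (2 * N + 1) * padeVec1 N X Y Z 0 + Y ^ (2 * N + 1) * padeVec1 N X Y Z 1
      + Z ^ (2 * N + 1) * padeVec1 N X Y Z 2 = 0 := by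
  obtain ⟨F, hF⟩ := exists_antideriv ((Polynomial.X - C (0:K)) ^ N * (Polynomial.X - C X) ^ N
      * (Polynomial.X - C (-Z)) ^ N)
  obtain ⟨h1, h2, h3⟩ := pade_rel N N N hs F hF
  have hc : ((-1) ^ N * (N.factorial * N.factorial * N.factorial) : K) ≠ 0 := by
    simp [Nat.factorial_ne_zero]
  apply mul_left_cancel₀ hc
  simp only [padeVec1, Matrix.cons_val_zero, Matrix.cons_val_one, Matrix.cons_val]
  rw [← two_mul] at h1 h2 h3
  linear_combination -h1 - h2 - h3

lemma padeVec2_rel {K : Type*} [Field K] [CharZero K] (N : ℕ) {X Y Z : K} (hs : X + Y + Z = 0) :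
    X ^ (2 * N + 1) * padeVec2 N X Y Z 0 + Y ^ (2 * N + 1) * padeVec2 N X Y Z 1
      + Z ^ (2 * N + 1) * padeVec2 N X Y Z 2 = 0 := by
  obtain ⟨F, hF⟩ := exists_antideriv ((Polynomial.X - C (0:K)) ^ (N + 1) * (Polynomial.X - C X) ^ N
      * (Polynomial.X - C (-Z)) ^ N)
  obtain ⟨h1, h2, h3⟩ := pade_rel (N + 1) N N hs F hF
  have hc : ((-1) ^ N * ((N + 1).factorial * N.factorial * N.factorial) : K) ≠ 0 := by
    simp [Nat.factorial_ne_zero]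
  apply mul_left_cancel₀ hc
  simp only [padeVec2, Matrix.cons_val_zero, Matrix.cons_val_one, Matrix.cons_val]
  rw [show N + 1 + N + 1 = 2 * N + 1 + 1 by ring] at h1
  rw [show N + (N + 1) + 1 = 2 * N + 1 + 1 by ring] at h3
  rw [← two_mul] at h2
  rw [pow_succ (-1 : K)] at h3
  rw [pow_succ X] at h1
  rw [pow_succ Z] at h3
  linear_combination -h1 - h2 - h3

lemma pade_indep {K : Type*} [Field K] [CharZero K] (N : ℕ) {X Y Z : K} (hs : X + Y + Z = 0)
    (hX : X ≠ 0) (hY : Y ≠ 0) (hZ : Z ≠ 0) (p q : K)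
    (h : ∀ i, p * padeVec1 N X Y Z i + q * padeVec2 N X Y Z i = 0) : p = 0 ∧ q = 0 := by
  obtain ⟨F₁, hF₁⟩ := exists_antideriv ((Polynomial.X - C (0:K)) ^ N * (Polynomial.X - C X) ^ N
      * (Polynomial.X - C (-Z)) ^ N)
  obtain ⟨F₂, hF₂⟩ := exists_antideriv ((Polynomial.X - C (0:K)) ^ (N + 1) * (Polynomial.X - C X) ^ N
      * (Polynomial.X - C (-Z)) ^ N)
  obtain ⟨h1, h2, h3⟩ := pade_rel N N N hs F₁ hF₁
  obtain ⟨k1, k2, k3⟩ := pade_rel (N + 1) N N hs F₂ hF₂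
  have hc1 : ((-1) ^ N * (N.factorial * N.factorial * N.factorial) : K) ≠ 0 := by
    simp [Nat.factorial_ne_zero]
  have hc2 : ((-1) ^ N * ((N + 1).factorial * N.factorial * N.factorial) : K) ≠ 0 := by
    simp [Nat.factorial_ne_zero]
  have hd1 : ((N + N + N + 1).factorial : K) ≠ 0 := by exact_mod_cast Nat.factorial_ne_zero _
  have hd2 : ((N + 1 + N + N + 1).factorial : K) ≠ 0 := by exact_mod_cast Nat.factorial_ne_zero _
  set c1 : K := (-1) ^ N * (N.factorial * N.factorial * N.factorial) with hc1d
  set c2 : K := (-1) ^ N * ((N + 1).factorial * N.factorial * N.factorial) with hc2d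
  set d1 : K := ((N + N + N + 1).factorial : K)
  set d2 : K := ((N + 1 + N + N + 1).factorial : K)
  have g0 := h 0
  have g2 := h 2
  simp only [padeVec1, padeVec2, Matrix.cons_val_zero, Matrix.cons_val] at g0 g2
  have key := pade_nonvanish N (a := 0) (b := X) (c := -Z) hX.symm
    (by intro hh; apply hY; linear_combination hs - hh) (by simpa using hZ)
    (p * d1 / c1) (q * d2 / c2) (C (p * d1 / c1) * F₁ + C (q * d2 / c2) * F₂)
    (by rw [derivative_add, derivative_C_mul, derivative_C_mul, hF₁, hF₂, mul_pow, mul_pow]; ring) ?_ ?_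
  · obtain ⟨ha, hb⟩ := key
    constructor
    · simpa [hd1, hc1] using ha
    · simpa [hd2, hc2] using hb
  · simp only [eval_add, eval_mul, eval_C]
    have : p * d1 / c1 * (eval X F₁ - eval 0 F₁) + q * d2 / c2 * (eval X F₂ - eval 0 F₂) = 0 := by
      field_simp
      linear_combination (c2 * p) * h1 + (c1 * q) * k1 + (c1 * c2 * X ^ (N + N + 1)) * g0
    linear_combination this
  · simp only [eval_add, eval_mul, eval_C]
    have : p * d1 / c1 * (eval 0 F₁ - eval (-Z) F₁) + q * d2 / c2 * (eval 0 F₂ - eval (-Z) F₂) = 0 := by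
      field_simp
      linear_combination (c2 * p) * h3 + (c1 * q) * k3 + (c1 * c2 * Z ^ (N + N + 1)) * g2
    linear_combination -this

lemma pade_choose {K : Type*} [Field K] [CharZero K] (N : ℕ) {X Y Z : K} (hs : X + Y + Z = 0)
    (hX : X ≠ 0) (hY : Y ≠ 0) (hZ : Z ≠ 0) (z : Fin 3 → K) (hz : z 0 ≠ 0) :
    ∃ w : Fin 3 → K, (w = padeVec1 N X Y Z ∨ w = padeVec2 N X Y Z) ∧
      (X ^ (2 * N + 1) * w 0 + Y ^ (2 * N + 1) * w 1 + Z ^ (2 * N + 1) * w 2 = 0) ∧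
      ¬ (z 0 * w 1 = z 1 * w 0 ∧ z 0 * w 2 = z 2 * w 0 ∧ z 1 * w 2 = z 2 * w 1) := by
  by_contra! hcon
  obtain ⟨a1, a2, a3⟩ := hcon _ (Or.inl rfl) (padeVec1_rel N hs)
  obtain ⟨b1, b2, b3⟩ := hcon _ (Or.inr rfl) (padeVec2_rel N hs)
  set u := padeVec1 N X Y Z with hu
  set w := padeVec2 N X Y Z with hw
  have h1 := pade_indep N hs hX hY hZ (w 0) (-(u 0)) (by
    intro i
    apply mul_left_cancel₀ hz
    fin_cases i
    · show z 0 * (w 0 * u 0 + -u 0 * w 0) = _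
      ring
    · show z 0 * (w 0 * u 1 + -u 0 * w 1) = _
      linear_combination w 0 * a1 - u 0 * b1
    · show z 0 * (w 0 * u 2 + -u 0 * w 2) = _
      linear_combination w 0 * a2 - u 0 * b2)
  have hu0 : u 0 = 0 := by simpa using h1.2
  have h2 := pade_indep N hs hX hY hZ 1 0 (by
    intro i
    apply mul_left_cancel₀ hz
    fin_cases i
    · show z 0 * (1 * u 0 + 0 * w 0) = _
      rw [hu0]; ring
    · show z 0 * (1 * u 1 + 0 * w 1) = _
      linear_combination a1 + z 1 * hu0
    · show z 0 * (1 * u 2 + 0 * w 2) = _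
      linear_combination a2 + z 2 * hu0)
  exact one_ne_zero h2.1
end P2

section P3
open Height Height.AdmissibleAbsValues

lemma hasFiniteMulSupport_iSup_aux {K : Type*} [Field K] [AdmissibleAbsValues K] {ι : Type*}
    [Finite ι] {x : ι → K} (hx : x ≠ 0) :
    (fun v : nonarchAbsVal (K := K) ↦ ⨆ i, v.val (x i)).HasFiniteMulSupport := by
  have : Nonempty {j // x j ≠ 0} := nonempty_subtype.mpr <| Function.ne_iff.mp hx
  suffices (fun v : nonarchAbsVal (K := K) ↦
      ⨆ i : {j // x j ≠ 0}, v.val (x i)).HasFiniteMulSupport by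
    convert! this with v
    obtain ⟨i, hi⟩ : ∃ j, x j ≠ 0 := Function.ne_iff.mp hx
    have : Nonempty ι := .intro i
    refine le_antisymm (ciSup_le fun j ↦ ?_) (ciSup_le fun ⟨j, hj⟩ ↦ Finite.le_ciSup_of_le j le_rfl)
    rcases eq_or_ne (x j) 0 with h | h
    · rw [h, v.val.map_zero]
      exact Real.iSup_nonneg' ⟨⟨i, hi⟩, v.val.nonneg ..⟩
    · exact Finite.le_ciSup_of_le ⟨j, h⟩ le_rfl
  exact Function.HasFiniteMulSupport.iSup fun j => hasFiniteMulSupport j.2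

lemma mulHeight_le_of_local {K : Type*} [Field K] [AdmissibleAbsValues K] {ι ι' : Type*}
    [Finite ι] [Finite ι'] {x : ι → K} {y : ι' → K} (hx : x ≠ 0) (hy : y ≠ 0) (n : ℕ) (C : ℝ)
    (hC : 0 ≤ C)
    (h1 : ∀ v : AbsoluteValue K ℝ, ⨆ j, v (y j) ≤ C * (⨆ i, v (x i)) ^ n)
    (h2 : ∀ v : AbsoluteValue K ℝ, IsNonarchimedean v → ⨆ j, v (y j) ≤ (⨆ i, v (x i)) ^ n) :
    mulHeight y ≤ C ^ totalWeight K * mulHeight x ^ n := by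
  rw [mulHeight_eq hy, mulHeight_eq hx, mul_pow, ← mul_assoc]
  have hs := hasFiniteMulSupport_iSup_aux hx
  have hs' := hasFiniteMulSupport_iSup_aux hy
  apply mul_le_mul
  · rw [← Multiset.prod_map_pow, totalWeight, ← Multiset.prod_replicate, ← Multiset.map_const',
      ← Multiset.prod_map_mul]
    exact Multiset.prod_map_le_prod_map₀ _ _
      (fun v _ ↦ Real.iSup_nonneg_of_nonnegHomClass v _) fun v _ ↦ h1 v
  · rw [finprod_pow hs]
    exact finprod_le_finprod hs' (fun v ↦ Real.iSup_nonneg_of_nonnegHomClass v.val _)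
      (hs.pow n) fun v ↦ h2 v.1 (isNonarchimedean _ v.2)
  · exact finprod_nonneg fun v ↦ Real.iSup_nonneg_of_nonnegHomClass v.val _
  · refine mul_nonneg (by positivity) (pow_nonneg ?_ _)
    exact Multiset.prod_map_nonneg fun v _ ↦ Real.iSup_nonneg_of_nonnegHomClass v _

lemma abv_natCast_le {K : Type*} [Field K] (v : AbsoluteValue K ℝ) (n : ℕ) : v (n : K) ≤ n := by
  induction n with
  | zero => simp
  | succ n ih =>
    push_cast
    exact (v.add_le _ _).trans (by simpa using ih)

lemma nonarch_natCast_le {K : Type*} [Field K] {v : AbsoluteValue K ℝ} (hv : IsNonarchimedean v)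
    (n : ℕ) : v (n : K) ≤ 1 := by
  induction n with
  | zero => simp
  | succ n ih =>
    push_cast
    exact (hv _ _).trans (by simpa using ih)

lemma padeW_abv {K : Type*} [Field K] (v : AbsoluteValue K ℝ) (l m n : ℕ) (X Z : K) (M : ℝ)
    (hX : v X ≤ M) (hZ : v Z ≤ M) :
    v (padeW l m n X Z) ≤ 2 ^ (2 * l + m + 3 * n + 1) * M ^ n := by
  have hM : 0 ≤ M := (v.nonneg _).trans hX
  unfold padeW
  refine (v.sum_le _ _).trans ?_
  have : ∀ j ∈ Finset.range (n + 1), v (((Nat.choose (l + j) j *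
      Nat.choose (l + m + n + 1) (n - j) : ℕ) : K) * X ^ j * Z ^ (n - j)) ≤
      2 ^ (2 * l + m + 2 * n + 1) * M ^ n := by
    intro j hj
    have hj : j ≤ n := by simpa [Nat.lt_succ_iff] using hj
    rw [map_mul, map_mul, map_pow, map_pow]
    have e : M ^ n = M ^ j * M ^ (n - j) := by rw [← pow_add]; congr 1; omega
    rw [e, ← mul_assoc]
    have h1 : v ((Nat.choose (l + j) j * Nat.choose (l + m + n + 1) (n - j) : ℕ) : K) ≤
        2 ^ (2 * l + m + 2 * n + 1) := by
      refine (abv_natCast_le v _).trans ?_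
      have a1 := Nat.choose_le_two_pow (l + j) j
      have a2 := Nat.choose_le_two_pow (l + m + n + 1) (n - j)
      have a3 : 2 ^ (l + j) ≤ 2 ^ (l + n) := Nat.pow_le_pow_right (by norm_num) (by omega)
      have := Nat.mul_le_mul (a1.trans a3) a2
      rw [← pow_add] at this
      have e : l + n + (l + m + n + 1) = 2 * l + m + 2 * n + 1 := by ring
      rw [e] at this
      exact_mod_cast this
    gcongr
  refine (Finset.sum_le_sum this).trans ?_
  rw [Finset.sum_const, Finset.card_range, nsmul_eq_mul, ← mul_assoc]
  gcongr
  have : (n + 1 : ℕ) ≤ 2 ^ n := Nat.lt_two_pow_self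
  have h' : ((n + 1 : ℕ) : ℝ) ≤ 2 ^ n := by exact_mod_cast this
  calc _ ≤ (2:ℝ) ^ n * 2 ^ (2 * l + m + 2 * n + 1) := by gcongr
    _ = _ := by rw [← pow_add]; congr 1; ring

lemma padeW_nonarch {K : Type*} [Field K] {v : AbsoluteValue K ℝ} (hv : IsNonarchimedean v)
    (l m n : ℕ) (X Z : K) (M : ℝ)
    (hX : v X ≤ M) (hZ : v Z ≤ M) :
    v (padeW l m n X Z) ≤ M ^ n := by
  have hM : 0 ≤ M := (v.nonneg _).trans hX
  unfold padeW
  refine hv.apply_sum_le.trans ?_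
  have : Nonempty (Finset.range (n + 1)) := ⟨⟨0, by simp⟩⟩
  refine ciSup_le ?_
  rintro ⟨j, hj⟩
  have hj : j ≤ n := by simpa [Nat.lt_succ_iff] using hj
  simp only
  rw [map_mul, map_mul, map_pow, map_pow]
  have e : M ^ n = 1 * M ^ j * M ^ (n - j) := by rw [one_mul, ← pow_add]; congr 1; omega
  rw [e]
  have := nonarch_natCast_le hv (Nat.choose (l + j) j * Nat.choose (l + m + n + 1) (n - j))
  gcongr

lemma padeVec1_height {K : Type*} [Field K] [AdmissibleAbsValues K] (N : ℕ) {X Y Z : K}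
    (hX : X ≠ 0) : mulHeight (padeVec1 N X Y Z) ≤
      (256 ^ (N + 1) : ℝ) ^ totalWeight K * mulHeight ![X, Y, Z] ^ (N + 1) := by
  have hone : (1:ℝ) ≤ (256 ^ (N + 1) : ℝ) ^ totalWeight K :=
    one_le_pow₀ (one_le_pow₀ (by norm_num))
  by_cases h0 : padeVec1 N X Y Z = 0
  · rw [h0, mulHeight_zero]
    exact one_le_mul_of_one_le_of_one_le hone (one_le_pow₀ (one_le_mulHeight _))
  have hx : ![X, Y, Z] ≠ 0 := fun h => hX (by simpa using congrFun h 0)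
  have hle : mulHeight (padeVec1 N X Y Z) ≤
      (256 ^ (N + 1) : ℝ) ^ totalWeight K * mulHeight ![X, Y, Z] ^ N := by
    refine mulHeight_le_of_local hx h0 N _ (by positivity) ?_ ?_
    · intro v
      have b : ∀ i, v (![X, Y, Z] i) ≤ ⨆ i, v (![X, Y, Z] i) := Finite.le_ciSup _
      have b0 := b 0; have b1 := b 1; have b2 := b 2
      simp only [Matrix.cons_val_zero, Matrix.cons_val_one, Matrix.cons_val] at b0 b1 b2
      set M := ⨆ i, v (![X, Y, Z] i)
      have hM : 0 ≤ M := (v.nonneg _).trans b0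
      have hp : (2:ℝ) ^ (2 * N + N + 3 * N + 1) ≤ 256 ^ (N + 1) := by
        rw [show (256:ℝ) = 2 ^ 8 by norm_num, ← pow_mul]
        exact pow_le_pow_right₀ (by norm_num) (by omega)
      have hp' := mul_le_mul_of_nonneg_right hp (pow_nonneg hM N)
      refine ciSup_le fun i => ?_
      fin_cases i
      · exact (padeW_abv v N N N X Z M b0 b2).trans hp'
      · exact (padeW_abv v N N N Y X M b1 b0).trans hp'
      · exact (padeW_abv v N N N Z Y M b2 b1).trans hp'
    · intro v hv
      have b : ∀ i, v (![X, Y, Z] i) ≤ ⨆ i, v (![X, Y, Z] i) := Finite.le_ciSup _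
      have b0 := b 0; have b1 := b 1; have b2 := b 2
      simp only [Matrix.cons_val_zero, Matrix.cons_val_one, Matrix.cons_val] at b0 b1 b2
      set M := ⨆ i, v (![X, Y, Z] i)
      refine ciSup_le fun i => ?_
      fin_cases i
      · exact padeW_nonarch hv N N N X Z M b0 b2
      · exact padeW_nonarch hv N N N Y X M b1 b0
      · exact padeW_nonarch hv N N N Z Y M b2 b1
  refine hle.trans (mul_le_mul_of_nonneg_left ?_ (by positivity))
  exact pow_le_pow_right₀ (one_le_mulHeight _) (by omega)

lemma padeVec2_height {K : Type*} [Field K] [AdmissibleAbsValues K] (N : ℕ) {X Y Z : K}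
    (hX : X ≠ 0) : mulHeight (padeVec2 N X Y Z) ≤
      (256 ^ (N + 1) : ℝ) ^ totalWeight K * mulHeight ![X, Y, Z] ^ (N + 1) := by
  have hone : (1:ℝ) ≤ (256 ^ (N + 1) : ℝ) ^ totalWeight K :=
    one_le_pow₀ (one_le_pow₀ (by norm_num))
  by_cases h0 : padeVec2 N X Y Z = 0
  · rw [h0, mulHeight_zero]
    exact one_le_mul_of_one_le_of_one_le hone (one_le_pow₀ (one_le_mulHeight _))
  have hx : ![X, Y, Z] ≠ 0 := fun h => hX (by simpa using congrFun h 0)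
  refine mulHeight_le_of_local hx h0 (N + 1) _ (by positivity) ?_ ?_
  · intro v
    have b : ∀ i, v (![X, Y, Z] i) ≤ ⨆ i, v (![X, Y, Z] i) := Finite.le_ciSup _
    have b0 := b 0; have b1 := b 1; have b2 := b 2
    simp only [Matrix.cons_val_zero, Matrix.cons_val_one, Matrix.cons_val] at b0 b1 b2
    set M := ⨆ i, v (![X, Y, Z] i)
    have hM : 0 ≤ M := (v.nonneg _).trans b0
    have hp : ∀ e, e ≤ 8 * (N + 1) → (2:ℝ) ^ e ≤ 256 ^ (N + 1) := by
      intro e he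
      rw [show (256:ℝ) = 2 ^ 8 by norm_num, ← pow_mul]
      exact pow_le_pow_right₀ (by norm_num) he
    have hp' : ∀ e, e ≤ 8 * (N + 1) → ∀ x w : K, v x ≤ M → v w ≤ 2 ^ e * M ^ N →
        v (x * w) ≤ 256 ^ (N + 1) * M ^ (N + 1) := by
      intro e he x w hx hw
      rw [map_mul]
      calc v x * v w ≤ M * (2 ^ e * M ^ N) := by gcongr
        _ = 2 ^ e * M ^ (N + 1) := by ring
        _ ≤ _ := mul_le_mul_of_nonneg_right (hp e he) (by positivity)
    refine ciSup_le fun i => ?_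
    fin_cases i
    · exact hp' _ (by omega) _ _ b0 (padeW_abv v (N+1) N N X Z M b0 b2)
    · exact (padeW_abv v N N (N+1) Y X M b1 b0).trans
        (mul_le_mul_of_nonneg_right (hp _ (by omega)) (by positivity))
    · show v (-(Z * padeW N (N+1) N Z Y)) ≤ _
      rw [AbsoluteValue.map_neg]
      exact hp' _ (by omega) _ _ b2 (padeW_abv v N (N+1) N Z Y M b2 b1)
  · intro v hv
    have b : ∀ i, v (![X, Y, Z] i) ≤ ⨆ i, v (![X, Y, Z] i) := Finite.le_ciSup _
    have b0 := b 0; have b1 := b 1; have b2 := b 2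
    simp only [Matrix.cons_val_zero, Matrix.cons_val_one, Matrix.cons_val] at b0 b1 b2
    set M := ⨆ i, v (![X, Y, Z] i)
    have hM : 0 ≤ M := (v.nonneg _).trans b0
    have hp' : ∀ x w : K, v x ≤ M → v w ≤ M ^ N → v (x * w) ≤ M ^ (N + 1) := by
      intro x w hx hw
      rw [map_mul, pow_succ']
      gcongr
    refine ciSup_le fun i => ?_
    fin_cases i
    · exact hp' _ _ b0 (padeW_nonarch hv (N+1) N N X Z M b0 b2)
    · exact padeW_nonarch hv N N (N+1) Y X M b1 b0
    · show v (-(Z * padeW N (N+1) N Z Y)) ≤ _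
      rw [AbsoluteValue.map_neg]
      exact hp' _ _ b2 (padeW_nonarch hv N (N+1) N Z Y M b2 b1)

end P3

section P4
open Height Height.AdmissibleAbsValues

def leviC (K : Type*) [Field K] : Fin 3 × (Fin 3 × Fin 3) → K := fun t =>
  if t.2 = (t.1 + 1, t.1 + 2) then 1 else if t.2 = (t.1 + 2, t.1 + 1) then -1 else 0

lemma leviC_sum {K : Type*} [Field K] (z w : Fin 3 → K) :
    (fun j => ∑ i, leviC K (j, i) * (z i.1 * w i.2)) =
      ![z 1 * w 2 - z 2 * w 1, z 2 * w 0 - z 0 * w 2, z 0 * w 1 - z 1 * w 0] := by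
  funext j
  rw [Fintype.sum_prod_type]
  fin_cases j <;> simp [Fin.sum_univ_three, leviC] <;> ring

lemma cross_height {K : Type*} [Field K] [AdmissibleAbsValues K] {p z w : Fin 3 → K}
    (hp : p ≠ 0) (h1 : p 0 * z 0 + p 1 * z 1 + p 2 * z 2 = 0)
    (h2 : p 0 * w 0 + p 1 * w 1 + p 2 * w 2 = 0)
    (hzw : ¬ (z 0 * w 1 = z 1 * w 0 ∧ z 0 * w 2 = z 2 * w 0 ∧ z 1 * w 2 = z 2 * w 1)) :
    logHeight p ≤ totalWeight K * Real.log 9 + logHeight (leviC K) + (logHeight z + logHeight w) := by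
  set q : Fin 3 → K := ![z 1 * w 2 - z 2 * w 1, z 2 * w 0 - z 0 * w 2, z 0 * w 1 - z 1 * w 0] with hq
  have hz : z ≠ 0 := by rintro rfl; simp at hzw
  have hw : w ≠ 0 := by rintro rfl; simp at hzw
  have hb : logHeight q ≤ totalWeight K * Real.log 9 + logHeight (leviC K)
      + (logHeight z + logHeight w) := by
    have := logHeight_linearMap_apply_le (leviC K) (fun i : Fin 3 × Fin 3 => z i.1 * w i.2)
    rw [leviC_sum, logHeight_fun_mul_eq hz hw] at this
    refine this.trans_eq ?_
    norm_num [Nat.card_eq_fintype_card]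
  have hpar : ∀ i j, p i * q j = p j * q i := by
    have a01 : p 0 * q 1 = p 1 * q 0 := by
      simp only [hq, Matrix.cons_val_zero, Matrix.cons_val_one, Matrix.cons_val]
      linear_combination z 2 * h2 - w 2 * h1
    have a02 : p 0 * q 2 = p 2 * q 0 := by
      simp only [hq, Matrix.cons_val_zero, Matrix.cons_val_one, Matrix.cons_val]
      linear_combination -z 1 * h2 + w 1 * h1
    have a12 : p 1 * q 2 = p 2 * q 1 := by
      simp only [hq, Matrix.cons_val_zero, Matrix.cons_val_one, Matrix.cons_val]
      linear_combination z 0 * h2 - w 0 * h1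
    intro i j
    fin_cases i <;> fin_cases j <;> first | rfl | assumption | (symm; assumption)
  have hq0 : q ≠ 0 := by
    intro h
    apply hzw
    have c0 := congrFun h 0; have c1 := congrFun h 1; have c2 := congrFun h 2
    simp only [hq, Matrix.cons_val_zero, Matrix.cons_val_one, Matrix.cons_val, Pi.zero_apply] at c0 c1 c2
    refine ⟨by linear_combination c2, by linear_combination -c1, by linear_combination c0⟩
  obtain ⟨i, hi⟩ := Function.ne_iff.mp hq0
  simp only [Pi.zero_apply] at hi
  have hpe : p = (p i / q i) • q := by
    funext j
    simp only [Pi.smul_apply, smul_eq_mul]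
    rw [div_mul_eq_mul_div, eq_div_iff hi, hpar j i]
  have hc : p i / q i ≠ 0 := by
    intro h; rw [h, zero_smul] at hpe; exact hp hpe
  rw [hpe, logHeight_smul_eq_logHeight _ hc]
  exact hb

lemma pade_height_ineq (K : Type*) [Field K] [CharZero K] [AdmissibleAbsValues K] :
    ∃ c : ℝ, 0 ≤ c ∧ ∀ (N : ℕ) (x y : Fin 3 → K), x 0 + x 1 + x 2 = 0 → y 0 + y 1 + y 2 = 0 →
      (∀ i, x i ≠ 0) → (∀ i, y i ≠ 0) →
      N * logHeight x ≤ logHeight (fun i => y i / x i ^ (2 * N + 1)) + c * (N + 1) := by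
  set c0 := totalWeight K * Real.log 9 + logHeight (leviC K) with hc0
  set c1 := totalWeight K * Real.log 256 with hc1
  have hc0' : 0 ≤ c0 := add_nonneg (mul_nonneg (by positivity) (Real.log_nonneg (by norm_num)))
    (logHeight_nonneg _)
  have hc1' : 0 ≤ c1 := mul_nonneg (by positivity) (Real.log_nonneg (by norm_num))
  refine ⟨c0 + c1, by positivity, ?_⟩
  intro N x y hx hy hx0 hy0
  set z : Fin 3 → K := fun i => y i / x i ^ (2 * N + 1) with hz
  have hz0 : z 0 ≠ 0 := div_ne_zero (hy0 0) (pow_ne_zero _ (hx0 0))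
  obtain ⟨w, hw, hrel, hne⟩ := pade_choose N hx (hx0 0) (hx0 1) (hx0 2) z hz0
  have hxe : ![x 0, x 1, x 2] = x := by
    funext i; fin_cases i <;> rfl
  have hwh : logHeight w ≤ (N + 1) * c1 + (N + 1) * logHeight x := by
    have : mulHeight w ≤ (256 ^ (N + 1) : ℝ) ^ totalWeight K * mulHeight x ^ (N + 1) := by
      rcases hw with rfl | rfl
      · simpa only [hxe] using padeVec1_height N (X := x 0) (Y := x 1) (Z := x 2) (hx0 0)
      · simpa only [hxe] using padeVec2_height N (X := x 0) (Y := x 1) (Z := x 2) (hx0 0)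
    have := Real.log_le_log (mulHeight_pos _) this
    rw [Real.log_mul (by positivity) (pow_ne_zero _ (mulHeight_ne_zero _)), Real.log_pow,
      Real.log_pow, Real.log_pow] at this
    rw [logHeight_eq_log_mulHeight, logHeight_eq_log_mulHeight x, hc1]
    push_cast at this
    linarith
  have hp0 : x ^ (2 * N + 1) ≠ 0 := by
    intro h; have := congrFun h 0
    exact pow_ne_zero _ (hx0 0) this
  have := cross_height (p := x ^ (2 * N + 1)) (z := z) (w := w) hp0 (by
      simp only [Pi.pow_apply, hz]
      rw [mul_div_cancel₀ _ (pow_ne_zero _ (hx0 0)), mul_div_cancel₀ _ (pow_ne_zero _ (hx0 1)),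
        mul_div_cancel₀ _ (pow_ne_zero _ (hx0 2))]
      exact hy) (by simpa only [Pi.pow_apply] using hrel) hne
  rw [logHeight_pow] at this
  push_cast at this
  have hN : (0:ℝ) ≤ N := by positivity
  have := mul_nonneg hN hc0'
  rw [← hc0] at *
  linarith

end P4

section P5

lemma bounded_of_cone_ineq {E : Type*} [NormedAddCommGroup E] [NormedSpace ℝ E] [ProperSpace E]
    (S : Set E) (C c : ℝ) (hC : 0 ≤ C) (hc : 0 ≤ c)
    (h : ∀ x ∈ S, ∀ y ∈ S, ∀ N : ℕ,
      N * ‖x‖ ≤ C * ‖y - (2 * N + 1 : ℝ) • x‖ + c * (N + 1)) :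
    ∃ B : ℝ, ∀ x ∈ S, ‖x‖ ≤ B := by
  by_contra! hB
  choose x hxS hx using fun n : ℕ => hB (n + 1)
  have hpos : ∀ n, 0 < ‖x n‖ := fun n => lt_trans (by positivity) (hx n)
  obtain ⟨u, -, φ, hφ, hu⟩ := (isCompact_sphere (0 : E) 1).tendsto_subseq
    (x := fun n => ‖x n‖⁻¹ • x n) (fun n => by
      simp [norm_smul, (hpos n).ne'])
  set ε : ℝ := 1 / (16 * (C + 1)) with hε
  have hε0 : 0 < ε := by positivity
  rw [Metric.tendsto_atTop] at hu
  obtain ⟨n0, hn0⟩ := hu ε hε0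
  obtain ⟨n1, hn1⟩ := exists_nat_ge (4 * c + 1)
  set n := max n0 n1
  set r := ‖x (φ n)‖ with hr
  have hr1 : 4 * c + 1 ≤ r := by
    have h1 : (n1 : ℝ) ≤ φ n := by exact_mod_cast (le_max_right n0 n1).trans (hφ.id_le n)
    have := hx (φ n)
    linarith
  obtain ⟨n2, hn2⟩ := exists_nat_ge ((16 * C + 8) * r)
  set k := max n0 n2
  set s := ‖x (φ k)‖ with hs
  have hs1 : (16 * C + 8) * r ≤ s := by
    have h1 : (n2 : ℝ) ≤ φ k := by exact_mod_cast (le_max_right n0 n2).trans (hφ.id_le k)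
    have := hx (φ k)
    linarith
  have hr0 : 0 < r := hpos _
  set q := (s / r - 1) / 2 with hq
  have hsr : 16 * C + 8 ≤ s / r := by rwa [le_div_iff₀ hr0]
  have hq0 : 0 ≤ q := by rw [hq]; linarith
  set N := ⌊q⌋₊ with hN
  have hN1 : (N : ℝ) ≤ q := Nat.floor_le hq0
  have hN2 : q < N + 1 := Nat.lt_floor_add_one q
  have hN3 : (2 * N + 1) * r ≤ s := by
    rw [← le_div_iff₀ hr0]; linarith
  have hN4 : s ≤ (2 * N + 3) * r := by
    rw [← div_le_iff₀ hr0]; linarith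
  have hN5 : 8 * C + 2 < N := by linarith
  have key := h _ (hxS (φ n)) _ (hxS (φ k)) N
  have d1 := hn0 n (le_max_left _ _)
  have d2 := hn0 k (le_max_left _ _)
  set un := ‖x (φ n)‖⁻¹ • x (φ n) with hun
  set uk := ‖x (φ k)‖⁻¹ • x (φ k) with huk
  have e1 : x (φ n) = r • un := by rw [hun, smul_smul, mul_inv_cancel₀ (hpos _).ne', one_smul]
  have e2 : x (φ k) = s • uk := by rw [huk, smul_smul, mul_inv_cancel₀ (hpos _).ne', one_smul]
  have nk : ‖uk‖ = 1 := by simp [huk, norm_smul, (hpos _).ne']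
  have hd : ‖uk - un‖ ≤ 2 * ε := by
    rw [← dist_eq_norm]
    have := dist_triangle_right uk un u
    simp only [Function.comp_apply] at d1 d2
    linarith
  have hd2 : ‖x (φ k) - (2 * N + 1 : ℝ) • x (φ n)‖ ≤ 2 * r + (2 * N + 1) * r * (2 * ε) := by
    have : x (φ k) - (2 * N + 1 : ℝ) • x (φ n) =
        (s - (2 * N + 1) * r) • uk + ((2 * N + 1) * r) • (uk - un) := by
      rw [e1, e2]; module
    rw [this]
    refine (norm_add_le _ _).trans ?_
    rw [norm_smul _ uk, norm_smul _ (uk - un), nk, Real.norm_of_nonneg (by linarith), Real.norm_of_nonneg (by positivity)]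
    have := mul_le_mul_of_nonneg_left hd (show 0 ≤ (2 * N + 1) * r by positivity)
    linarith
  have hd3 := mul_le_mul_of_nonneg_left hd2 hC
  have hCe : C * (2 * ε) ≤ 1 / 8 := by
    rw [hε]
    have : C * (2 * (1 / (16 * (C + 1)))) = (C / (C + 1)) / 8 := by field_simp; ring
    rw [this]
    have : C / (C + 1) ≤ 1 := by rw [div_le_one (by positivity)]; linarith
    linarith
  have hd4 := mul_le_mul_of_nonneg_left hCe (show 0 ≤ (2 * N + 1) * r by positivity)
  have hd5 : c * (N + 1) ≤ r / 4 * (N + 1) := mul_le_mul_of_nonneg_right (by linarith) (by positivity)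
  have hd6 := mul_lt_mul_of_pos_right hN5 hr0
  rw [← hr] at key
  nlinarith

open Height Height.AdmissibleAbsValues

lemma logHeight_triple_le {K : Type*} [Field K] [AdmissibleAbsValues K] (a b : K) :
    logHeight ![a, b, 1] ≤ logHeight₁ a + logHeight₁ b := by
  have e : (![a, b, 1] : Fin 3 → K) = (![a, 1] ∘ ![0, 1, 1]) * (![b, 1] ∘ ![1, 0, 1]) := by
    funext i; fin_cases i <;> simp
  rw [e, logHeight₁_eq_logHeight, logHeight₁_eq_logHeight]
  exact (logHeight_mul_le _ _).trans (add_le_add (logHeight_comp_le _ _) (logHeight_comp_le _ _))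

lemma le_logHeight_triple {K : Type*} [Field K] [AdmissibleAbsValues K] (a b : K) :
    logHeight₁ a ≤ logHeight ![-a, b, 1] := by
  rw [← logHeight₁_neg, logHeight₁_eq_logHeight]
  have e : (![-a, 1] : Fin 2 → K) = ![-a, b, 1] ∘ ![0, 2] := by
    funext i; fin_cases i <;> simp
  rw [e]
  exact logHeight_comp_le (ι := Fin 2) (ι' := Fin 3) _ _

lemma le_logHeight_triple' {K : Type*} [Field K] [AdmissibleAbsValues K] (a b : K) :
    logHeight₁ b ≤ logHeight ![a, -b, 1] := by
  rw [← logHeight₁_neg, logHeight₁_eq_logHeight]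
  have e : (![-b, 1] : Fin 2 → K) = ![a, -b, 1] ∘ ![1, 2] := by
    funext i; fin_cases i <;> simp
  have := logHeight_comp_le (![1, 2] : Fin 2 → Fin 3) ![a, -b, 1]
  rwa [← e] at this

lemma unit_height_ineq (K : Type*) [Field K] [CharZero K] [AdmissibleAbsValues K] :
    ∃ c : ℝ, 0 ≤ c ∧ ∀ (N : ℕ) (x y : K), x ≠ 0 → 1 - x ≠ 0 → y ≠ 0 → 1 - y ≠ 0 →
      N * max (logHeight₁ x) (logHeight₁ (1 - x)) ≤
        logHeight₁ (y / x ^ (2 * N + 1)) + logHeight₁ ((1 - y) / (1 - x) ^ (2 * N + 1))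
          + c * (N + 1) := by
  obtain ⟨c, hc, h⟩ := pade_height_ineq K
  refine ⟨c, hc, fun N x y hx hx1 hy hy1 => ?_⟩
  have := h N ![-x, -(1 - x), 1] ![-y, -(1-y), 1] (by simp; ring) (by simp; ring)
    (by
      have := neg_ne_zero.mpr hx1; have := neg_ne_zero.mpr hx
      intro i; fin_cases i <;> first | assumption | exact one_ne_zero)
    (by
      have := neg_ne_zero.mpr hy1; have := neg_ne_zero.mpr hy
      intro i; fin_cases i <;> first | assumption | exact one_ne_zero)
  have e : (fun i => (![-y, -(1-y), 1] : Fin 3 → K) i / (![-x, -(1 - x), 1] : Fin 3 → K) i ^ (2 * N + 1)) =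
      ![y / x ^ (2 * N + 1), (1 - y) / (1 - x) ^ (2 * N + 1), 1] := by
    have ho : Odd (2 * N + 1) := ⟨N, rfl⟩
    funext i; fin_cases i
    · simp only [Fin.zero_eta, Matrix.cons_val_zero, ho.neg_pow, neg_div_neg_eq]
    · simp only [Fin.mk_one, Matrix.cons_val_one, Matrix.cons_val_zero, ho.neg_pow, neg_div_neg_eq]
    · simp
  rw [e] at this
  refine (mul_le_mul_of_nonneg_left ?_ (by positivity)).trans (this.trans ?_)
  · exact max_le (le_logHeight_triple _ _) (le_logHeight_triple' _ _)
  · gcongr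
    exact logHeight_triple_le _ _

end P5

section P6
open Height Height.AdmissibleAbsValues Real

lemma posLog_support_aux {K : Type*} [Field K] [AdmissibleAbsValues K] {u : K} (hu : u ≠ 0) :
    (Function.support (fun v : nonarchAbsVal (K := K) => log⁺ (v.1 u))).Finite := by
  refine (hasFiniteMulSupport hu).subset ?_
  intro v hv
  simp only [Function.mem_support, Function.mem_mulSupport] at *
  intro h; rw [h] at hv; simp at hv

lemma posLog_le_logHeight₁ {K : Type*} [Field K] [AdmissibleAbsValues K] {u : K} (hu : u ≠ 0)
    {v : AbsoluteValue K ℝ} (hv : v ∈ archAbsVal (K := K) ∨ v ∈ nonarchAbsVal (K := K)) :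
    log⁺ (v u) ≤ logHeight₁ u := by
  rw [logHeight₁_eq]
  have h1 : 0 ≤ (archAbsVal.map fun v : AbsoluteValue K ℝ => log⁺ (v u)).sum :=
    Multiset.sum_nonneg (by
      intro x hx
      obtain ⟨v, -, rfl⟩ := Multiset.mem_map.mp hx
      exact posLog_nonneg)
  have h2 : 0 ≤ ∑ᶠ v : nonarchAbsVal (K := K), log⁺ (v.1 u) := finsum_nonneg fun _ => posLog_nonneg
  rcases hv with hv | hv
  · have : log⁺ (v u) ≤ (archAbsVal.map fun v : AbsoluteValue K ℝ => log⁺ (v u)).sum := by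
      refine Multiset.single_le_sum (by
        intro x hx
        obtain ⟨v, -, rfl⟩ := Multiset.mem_map.mp hx
        exact posLog_nonneg) _ (Multiset.mem_map.mpr ⟨v, hv, rfl⟩)
    linarith
  · have : log⁺ (v u) ≤ ∑ᶠ v : nonarchAbsVal (K := K), log⁺ (v.1 u) :=
      single_le_finsum (⟨v, hv⟩ : nonarchAbsVal (K := K)) (posLog_support_aux hu) fun _ => posLog_nonneg
    linarith

lemma abs_log_le_logHeight₁ {K : Type*} [Field K] [AdmissibleAbsValues K] {u : K} (hu : u ≠ 0)
    {v : AbsoluteValue K ℝ} (hv : v ∈ archAbsVal (K := K) ∨ v ∈ nonarchAbsVal (K := K)) :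
    |log (v u)| ≤ logHeight₁ u := by
  have h1 := posLog_le_logHeight₁ hu hv
  have h2 := posLog_le_logHeight₁ (inv_ne_zero hu) hv
  rw [logHeight₁_inv, map_inv₀] at h2
  rw [abs_le]
  have a1 : log (v u) ≤ log⁺ (v u) := le_max_right _ _
  have a2 : log (v u)⁻¹ ≤ log⁺ (v u)⁻¹ := le_max_right _ _
  rw [log_inv] at a2
  constructor <;> linarith

lemma logHeight₁_le_of_logs {K : Type*} [Field K] [AdmissibleAbsValues K] {u : K}
    (S : Finset (nonarchAbsVal (K := K))) (hS : ∀ v : nonarchAbsVal (K := K), v ∉ S → v.1 u = 1)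
    {M : ℝ} (hM : 0 ≤ M) (h1 : ∀ v ∈ archAbsVal (K := K), |log (v u)| ≤ M)
    (h2 : ∀ v ∈ S, |log (v.1 u)| ≤ M) :
    logHeight₁ u ≤ (totalWeight K + S.card) * M := by
  have hp : ∀ t : ℝ, |log t| ≤ M → log⁺ t ≤ M := fun t ht => max_le hM ((le_abs_self _).trans ht)
  rw [logHeight₁_eq, add_mul]
  apply add_le_add
  · have := Multiset.sum_le_card_nsmul (archAbsVal.map fun v : AbsoluteValue K ℝ => log⁺ (v u)) M (by
      intro x hx
      obtain ⟨v, hv, rfl⟩ := Multiset.mem_map.mp hx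
      exact hp _ (h1 v hv))
    rw [Multiset.card_map, nsmul_eq_mul] at this
    exact this
  · rw [finsum_eq_sum_of_support_subset (s := S)]
    · have := Finset.sum_le_card_nsmul S (fun v => log⁺ (v.1 u)) M fun v hv => hp _ (h2 v hv)
      rwa [nsmul_eq_mul] at this
    · intro v hv
      by_contra hvS
      exact hv (by simp [hS v hvS])

theorem sunit_finite (K : Type*) [Field K] [NumberField K] (S : Finset (nonarchAbsVal (K := K))) :
    {x : K | x ≠ 0 ∧ 1 - x ≠ 0 ∧ ∀ v : nonarchAbsVal (K := K), v ∉ S →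
      v.1 x = 1 ∧ v.1 (1 - x) = 1}.Finite := by
  classical
  set Sol := {x : K | x ≠ 0 ∧ 1 - x ≠ 0 ∧ ∀ v : nonarchAbsVal (K := K), v ∉ S →
      v.1 x = 1 ∧ v.1 (1 - x) = 1} with hSol
  set T : Finset (AbsoluteValue K ℝ) := (archAbsVal (K := K)).toFinset ∪ S.image Subtype.val with hT
  have hTm : ∀ v : T, v.1 ∈ archAbsVal (K := K) ∨ v.1 ∈ nonarchAbsVal (K := K) := by
    rintro ⟨v, hv⟩
    rw [hT, Finset.mem_union, Multiset.mem_toFinset, Finset.mem_image] at hv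
    rcases hv with hv | ⟨w, -, rfl⟩
    · exact Or.inl hv
    · exact Or.inr w.2
  set D : ℝ := totalWeight K + S.card with hD
  have hD0 : 0 ≤ D := by positivity
  let lam : K → (T → ℝ) := fun u v => log (v.1 u)
  have hup : ∀ u : K, (∀ v : nonarchAbsVal (K := K), v ∉ S → v.1 u = 1) →
      logHeight₁ u ≤ D * ‖lam u‖ := by
    intro u hu
    refine logHeight₁_le_of_logs S hu (norm_nonneg _) ?_ ?_
    · intro v hv
      exact norm_le_pi_norm (lam u) ⟨v, by simp [hT, hv]⟩
    · intro v hv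
      exact norm_le_pi_norm (lam u) ⟨v.1, Finset.mem_union_right _ (Finset.mem_image_of_mem _ hv)⟩
  have hlo : ∀ u : K, u ≠ 0 → ‖lam u‖ ≤ logHeight₁ u := by
    intro u hu
    refine (pi_norm_le_iff_of_nonneg (zero_le_logHeight₁ _)).mpr fun v => ?_
    exact abs_log_le_logHeight₁ hu (hTm v)
  have hlam : ∀ (x y : K) (m : ℕ), x ≠ 0 → y ≠ 0 → lam (y / x ^ m) = lam y - (m : ℝ) • lam x := by
    intro x y m hx hy
    funext v
    simp only [lam, map_div₀, map_pow, Pi.sub_apply, Pi.smul_apply, smul_eq_mul]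
    rw [log_div (by simpa using hy) (pow_ne_zero _ (by simpa using hx)), log_pow]
  let L2 : K → (T → ℝ) × (T → ℝ) := fun x => (lam x, lam (1 - x))
  obtain ⟨c, hc, hineq⟩ := unit_height_ineq K
  obtain ⟨B, hB⟩ := bounded_of_cone_ineq (L2 '' Sol) (2 * D) c (by positivity) hc (by
    rintro _ ⟨x, ⟨hx, hx1, hxS⟩, rfl⟩ _ ⟨y, ⟨hy, hy1, hyS⟩, rfl⟩ N
    have key := hineq N x y hx hx1 hy hy1
    have l1 : ‖L2 x‖ ≤ max (logHeight₁ x) (logHeight₁ (1 - x)) := by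
      rw [Prod.norm_def]
      exact max_le_max (hlo _ hx) (hlo _ hx1)
    have u1 := hup (y / x ^ (2 * N + 1)) (fun v hv => by
      rw [map_div₀, map_pow, (hxS v hv).1, (hyS v hv).1]; simp)
    have u2 := hup ((1 - y) / (1 - x) ^ (2 * N + 1)) (fun v hv => by
      rw [map_div₀, map_pow, (hxS v hv).2, (hyS v hv).2]; simp)
    rw [hlam _ _ _ hx hy] at u1
    rw [hlam _ _ _ hx1 hy1] at u2
    push_cast at u1 u2
    have n1 : ‖lam y - (2 * (N:ℝ) + 1) • lam x‖ ≤ ‖L2 y - (2 * (N:ℝ) + 1) • L2 x‖ :=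
      norm_fst_le (L2 y - (2 * (N:ℝ) + 1) • L2 x)
    have n2 : ‖lam (1 - y) - (2 * (N:ℝ) + 1) • lam (1 - x)‖ ≤ ‖L2 y - (2 * (N:ℝ) + 1) • L2 x‖ :=
      norm_snd_le (L2 y - (2 * (N:ℝ) + 1) • L2 x)
    have m1 := mul_le_mul_of_nonneg_left n1 hD0
    have m2 := mul_le_mul_of_nonneg_left n2 hD0
    have m3 := mul_le_mul_of_nonneg_left l1 (show (0:ℝ) ≤ N by positivity)
    linarith)
  refine (Northcott.finite_le (h := (logHeight₁ : K → ℝ)) (D * B)).subset ?_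
  intro x hx
  show logHeight₁ x ≤ D * B
  refine (hup x fun v hv => (hx.2.2 v hv).1).trans (mul_le_mul_of_nonneg_left ?_ hD0)
  exact (norm_fst_le (L2 x)).trans (hB _ ⟨x, hx, rfl⟩)

end P6

section P7
open Height Height.AdmissibleAbsValues Real

lemma nonarch_intCast_le {K : Type*} [Field K] {v : AbsoluteValue K ℝ} (hv : IsNonarchimedean v)
    (n : ℤ) : v (n : K) ≤ 1 := by
  obtain ⟨m, rfl | rfl⟩ := n.eq_nat_or_neg
  · simpa using nonarch_natCast_le hv m
  · simpa using nonarch_natCast_le hv m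

theorem unit_eq_image_finite {A : Type*} [CommRing A] [Algebra.FiniteType ℤ A]
    {K : Type*} [Field K] [NumberField K] (φ : A →+* K) :
    {y : K | ∃ x : Aˣ, ∃ x' : Aˣ, (x : A) + x' = 1 ∧ y = φ x}.Finite := by
  classical
  obtain ⟨G, hG⟩ := (Algebra.FiniteType.out : (⊤ : Subalgebra ℤ A).FG)
  have hbad : (⋃ g ∈ G, {v : nonarchAbsVal (K := K) | 1 < v.1 (φ g)}).Finite := by
    refine Set.Finite.biUnion G.finite_toSet fun g _ => ?_
    by_cases hg : φ g = 0
    · simp [hg, not_lt.mpr zero_le_one]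
    · refine (hasFiniteMulSupport hg).subset fun v hv => ?_
      simp only [Set.mem_setOf_eq] at hv
      exact hv.ne'
  have hgood : ∀ v : nonarchAbsVal (K := K), v ∉ hbad.toFinset → ∀ a : A, v.1 (φ a) ≤ 1 := by
    intro v hv a
    have hv' : IsNonarchimedean v.1 := isNonarchimedean _ v.2
    have ha : a ∈ Algebra.adjoin ℤ (G : Set A) := by rw [hG]; trivial
    induction ha using Algebra.adjoin_induction with
    | mem x hx =>
      by_contra hlt
      apply hv
      simp only [Set.Finite.mem_toFinset, Set.mem_iUnion]
      exact ⟨x, hx, not_le.mp hlt⟩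
    | algebraMap r => simpa using nonarch_intCast_le hv' r
    | add x y _ _ hx hy =>
      rw [map_add]
      exact (hv' _ _).trans (max_le hx hy)
    | mul x y _ _ hx hy =>
      rw [map_mul, map_mul]
      exact mul_le_one₀ hx (v.1.nonneg _) hy
  have hunit : ∀ v : nonarchAbsVal (K := K), v ∉ hbad.toFinset → ∀ a : Aˣ, v.1 (φ a) = 1 := by
    intro v hv a
    refine le_antisymm (hgood v hv a) ?_
    have h1 : v.1 (φ a) * v.1 (φ (a⁻¹ : Aˣ)) = 1 := by
      rw [← map_mul, ← map_mul]; simp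
    have h2 := hgood v hv (a⁻¹ : Aˣ)
    have h3 := v.1.nonneg (φ a)
    nlinarith
  refine (sunit_finite K hbad.toFinset).subset ?_
  rintro y ⟨x, x', hxx, rfl⟩
  have e : 1 - φ x = φ x' := by rw [← map_one φ, ← hxx, map_add]; ring
  refine ⟨(x.map φ.toMonoidHom).ne_zero, ?_, fun v hv => ⟨hunit v hv x, ?_⟩⟩
  · rw [e]; exact (x'.map φ.toMonoidHom).ne_zero
  · rw [e]; exact hunit v hv x'

end P7

section P8
open IsDedekindDomain

lemma dedekind_units_hom {D : Type*} [CommRing D] [IsDedekindDomain D] {F : Type*} [Field F]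
    [Algebra D F] [IsFractionRing D F] {A : Type*} [CommRing A] [Algebra.FiniteType ℤ A]
    (ι : A →+* F) :
    ∃ (S : Finset (HeightOneSpectrum D)) (g : Additive Aˣ →+ (S → ℤ)),
      ∀ u : Aˣ, g (Additive.ofMul u) = 0 → ι u ∈ (algebraMap D F).range := by
  classical
  obtain ⟨G, hG⟩ := (Algebra.FiniteType.out : (⊤ : Subalgebra ℤ A).FG)
  have hbad : (⋃ g ∈ G, {v : HeightOneSpectrum D | ¬ v.valuation F (ι g) ≤ 1}).Finite := by
    refine Set.Finite.biUnion G.finite_toSet fun g _ => ?_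
    refine (HeightOneSpectrum.Support.finite D (ι g)).subset fun v hv => ?_
    exact not_le.mp hv
  have hgood : ∀ v : HeightOneSpectrum D, v ∉ hbad.toFinset → ∀ a : A, v.valuation F (ι a) ≤ 1 := by
    intro v hv a
    have ha : a ∈ Algebra.adjoin ℤ (G : Set A) := by rw [hG]; trivial
    induction ha using Algebra.adjoin_induction with
    | mem x hx =>
      by_contra hlt
      apply hv
      simp only [Set.Finite.mem_toFinset, Set.mem_iUnion]
      exact ⟨x, hx, hlt⟩
    | algebraMap r =>
      have : ι (algebraMap ℤ A r) = algebraMap D F (r : D) := by simp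
      rw [this]
      exact v.valuation_le_one _
    | add x y _ _ hx hy =>
      rw [map_add]
      exact (Valuation.map_add _ _ _).trans (max_le hx hy)
    | mul x y _ _ hx hy =>
      rw [map_mul, map_mul]
      exact mul_le_one' hx hy
  have hne : ∀ (v : HeightOneSpectrum D) (u : Aˣ), v.valuation F (ι u) ≠ 0 := by
    intro v u
    rw [Valuation.ne_zero_iff]
    exact (u.map ι.toMonoidHom).ne_zero
  refine ⟨hbad.toFinset, 
    { toFun := fun u v => WithZero.log (v.1.valuation F (ι u.toMul))
      map_zero' := by funext v; simp
      map_add' := fun a b => by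
        funext v
        simp only [toMul_add, Units.val_mul, map_mul, Pi.add_apply]
        exact WithZero.log_mul (hne _ _) (hne _ _) }, ?_⟩
  intro u hu
  apply HeightOneSpectrum.mem_integers_of_valuation_le_one
  intro v
  by_cases hv : v ∈ hbad.toFinset
  · have := congrFun hu ⟨v, hv⟩
    simp only [AddMonoidHom.coe_mk, ZeroHom.coe_mk, toMul_ofMul, Pi.zero_apply] at this
    have h2 := WithZero.exp_log (hne v u)
    rw [this] at h2
    rw [← h2]; simp
  · exact hgood v hv u

lemma noeth_of_homs {M N N' : Type*} [AddCommGroup M] [AddCommGroup N] [AddCommGroup N']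
    [IsNoetherian ℤ N] [IsNoetherian ℤ N'] (g : M →+ N) (h : M →+ N')
    (hi : ∀ x, g x = 0 → h x = 0 → x = 0) : IsNoetherian ℤ M := by
  refine isNoetherian_of_injective (g.prod h).toIntLinearMap ?_
  rw [injective_iff_map_eq_zero]
  intro x hx
  have : (g x, h x) = 0 := hx
  exact hi x (congrArg Prod.fst this) (congrArg Prod.snd this)

lemma noeth_of_ker {M N : Type*} [AddCommGroup M] [AddCommGroup N]
    [IsNoetherian ℤ N] (g : M →+ N) (hk : IsNoetherian ℤ g.toIntLinearMap.ker) : IsNoetherian ℤ M :=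
  isNoetherian_of_range_eq_ker g.toIntLinearMap.ker.subtype g.toIntLinearMap
    (Submodule.range_subtype _)

lemma numberField_units_noeth {K : Type*} [Field K] [NumberField K] {A : Type*} [CommRing A]
    [Algebra.FiniteType ℤ A] (ι : A →+* K) (hι : Function.Injective ι) :
    IsNoetherian ℤ (Additive Aˣ) := by
  obtain ⟨S, g, hg⟩ := dedekind_units_hom (D := NumberField.RingOfIntegers K) ι
  apply noeth_of_ker g
  have hg' : ∀ x : g.toIntLinearMap.ker, ∃ y : NumberField.RingOfIntegers K,
      algebraMap _ K y = ι x.1.toMul := fun x => hg x.1.toMul x.2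
  choose f hf using hg'
  have hinj : Function.Injective (algebraMap (NumberField.RingOfIntegers K) K) :=
    FaithfulSMul.algebraMap_injective _ _
  let h : Multiplicative g.toIntLinearMap.ker →* NumberField.RingOfIntegers K :=
    { toFun := fun x => f x.toAdd
      map_one' := by
        apply hinj; rw [hf, map_one (algebraMap (NumberField.RingOfIntegers K) K)]
        show ι ((1 : Aˣ) : A) = 1
        simp
      map_mul' := fun a b => by
        apply hinj
        rw [map_mul (algebraMap (NumberField.RingOfIntegers K) K), hf, hf, hf]
        show ι ((a.toAdd.1.toMul * b.toAdd.1.toMul : Aˣ) : A) = _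
        rw [Units.val_mul, map_mul] }
  let h' : g.toIntLinearMap.ker →+ Additive (NumberField.RingOfIntegers K)ˣ :=
    MonoidHom.toAdditiveRight h.toHomUnits
  refine isNoetherian_of_injective h'.toIntLinearMap ?_
  intro a b hab
  have h1 : h.toHomUnits (Multiplicative.ofAdd a) = h.toHomUnits (Multiplicative.ofAdd b) := hab
  have h2 : f a = f b := congrArg Units.val h1
  have h3 : ι a.1.toMul = ι b.1.toMul := by rw [← hf, ← hf, h2]
  apply Subtype.ext
  exact Additive.toMul.injective (Units.ext (hι h3))

end P8

section P9
open IsDedekindDomain Polynomial IntermediateField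

lemma adjoin_transc_pid {k F : Type*} [Field k] [Field F] [Algebra k F] {Y : F}
    (hY : Transcendental k Y) : IsPrincipalIdealRing (Algebra.adjoin k {Y}) := by
  let e : k[X] ≃ₐ[k] Algebra.adjoin k {Y} :=
    (AlgEquiv.ofInjective (aeval Y) (transcendental_iff_injective.mp hY)).trans
      (Subalgebra.equivOfEq _ _ (Algebra.adjoin_singleton_eq_range_aeval k Y).symm)
  exact IsPrincipalIdealRing.of_surjective e.toRingEquiv.toRingHom e.surjective

open scoped IntermediateField.algebraAdjoinAdjoin in
lemma funcField_units_hom {k F : Type*} [Field k] [CharZero k] [Field F] [Algebra k F] {Y : F}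
    (hY : Transcendental k Y) [FiniteDimensional k⟮Y⟯ F] {A : Type*} [CommRing A]
    [Algebra.FiniteType ℤ A] (ι : A →+* F) :
    ∃ (S : Type) (_ : Finite S) (g : Additive Aˣ →+ (S → ℤ)),
      ∀ u : Aˣ, g (Additive.ofMul u) = 0 → IsIntegral (Algebra.adjoin k {Y}) (ι u) := by
  have := adjoin_transc_pid hY
  have : CharZero k⟮Y⟯ := charZero_of_injective_algebraMap (algebraMap k k⟮Y⟯).injective
  have : IsScalarTower (Algebra.adjoin k {Y}) k⟮Y⟯ F := inferInstance
  have : IsDedekindDomain (integralClosure (Algebra.adjoin k {Y}) F) :=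
    integralClosure.isDedekindDomain _ k⟮Y⟯ F
  have : IsFractionRing (integralClosure (Algebra.adjoin k {Y}) F) F :=
    integralClosure.isFractionRing_of_finite_extension k⟮Y⟯ F
  obtain ⟨S, g, hg⟩ := dedekind_units_hom (D := integralClosure (Algebra.adjoin k {Y}) F) ι
  let e := (Fintype.equivFin S)
  refine ⟨Fin (Fintype.card S), inferInstance,
    (LinearEquiv.funCongrLeft ℤ ℤ e.symm).toAddMonoidHom.comp g, ?_⟩
  intro u hu
  obtain ⟨y, hy⟩ := hg u ((LinearEquiv.funCongrLeft ℤ ℤ e.symm).injective (by simpa using hu))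
  rw [← hy]
  exact y.2

open scoped IntermediateField.algebraAdjoinAdjoin in
lemma minpoly_coeff_mem {k F : Type*} [Field k] [CharZero k] [Field F] [Algebra k F] {Y : F}
    (hY : Transcendental k Y) (E : IntermediateField k F) (hE : E = k⟮Y⟯) {z : F}
    (hz : IsIntegral (Algebra.adjoin k {Y}) z) (n : ℕ) :
    ((minpoly E z).coeff n : F) ∈ Algebra.adjoin k {Y} := by
  subst hE
  have := adjoin_transc_pid hY
  have := minpoly.isIntegrallyClosed_eq_field_fractions (R := Algebra.adjoin k {Y}) k⟮Y⟯ F hz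
  rw [Algebra.algebraMap_self, RingHom.id_apply] at this
  rw [this, coeff_map]
  exact ((minpoly (Algebra.adjoin k {Y}) z).coeff n).2

lemma adjoin_inter_adjoin_inv {k F : Type*} [Field k] [Field F] [Algebra k F] {X : F}
    (hX : Transcendental k X) {w : F} (h1 : w ∈ Algebra.adjoin k {X})
    (h2 : w ∈ Algebra.adjoin k {X⁻¹}) : w ∈ (algebraMap k F).range := by
  rw [Algebra.adjoin_singleton_eq_range_aeval] at h1 h2
  obtain ⟨p, rfl⟩ := h1
  obtain ⟨q, hq⟩ := h2
  have hX0 : X ≠ 0 := by rintro rfl; exact hX (isAlgebraic_zero)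
  letI : Invertible X⁻¹ := ⟨X, mul_inv_cancel₀ hX0, inv_mul_cancel₀ hX0⟩
  have h3 := eval₂_reverse_mul_pow (algebraMap k F) X⁻¹ q
  have h4 : eval₂ (algebraMap k F) (⅟X⁻¹) q.reverse = aeval X q.reverse := rfl
  have h5 : eval₂ (algebraMap k F) X⁻¹ q = aeval X⁻¹ q := rfl
  rw [h4, h5] at h3
  have hq' : aeval X⁻¹ q = aeval X p := hq
  rw [hq', inv_pow, ← div_eq_mul_inv, div_eq_iff (pow_ne_zero _ hX0)] at h3
  have h6 : q.reverse = p * Polynomial.X ^ q.natDegree := by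
    apply transcendental_iff_injective.mp hX
    rw [h3]; simp
  by_cases hp : p = 0
  · exact ⟨0, by simp [hp]⟩
  have h7 : p.natDegree = 0 := by
    have := q.reverse_natDegree_le
    rw [h6, natDegree_mul_X_pow _ hp] at this
    omega
  rw [eq_C_of_natDegree_eq_zero h7]
  exact ⟨p.coeff 0, by simp⟩

lemma algebraic_of_integral_both {k F : Type*} [Field k] [CharZero k] [Field F] [Algebra k F] {X : F}
    (hX : Transcendental k X) {z : F} (h1 : IsIntegral (Algebra.adjoin k {X}) z)
    (h2 : IsIntegral (Algebra.adjoin k {X⁻¹}) z) : IsAlgebraic k z := by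
  have hX' : Transcendental k X⁻¹ := fun h => hX (by simpa using h.inv)
  have hE : k⟮X⟯ = k⟮X⁻¹⟯ := by
    apply le_antisymm
    · rw [adjoin_simple_le_iff]
      simpa using inv_mem (mem_adjoin_simple_self k X⁻¹)
    · rw [adjoin_simple_le_iff]
      exact inv_mem (mem_adjoin_simple_self k X)
  have hc : ∀ n, ∃ c : k, algebraMap k F c = ((minpoly k⟮X⟯ z).coeff n : F) := fun n =>
    adjoin_inter_adjoin_inv hX (minpoly_coeff_mem hX _ rfl h1 n) (minpoly_coeff_mem hX' _ hE h2 n)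
  have hzi : IsIntegral k⟮X⟯ z := by
    obtain ⟨p, hp, hp'⟩ := h1
    refine ⟨p.map (Subalgebra.inclusion (algebra_adjoin_le_adjoin k {X} :
      Algebra.adjoin k {X} ≤ k⟮X⟯.toSubalgebra)).toRingHom, hp.map _, ?_⟩
    rw [eval₂_map]
    exact hp'
  have hl : (minpoly k⟮X⟯ z).map (algebraMap k⟮X⟯ F) ∈ lifts (algebraMap k F) := by
    rw [lifts_iff_coeff_lifts]
    intro n
    rw [coeff_map]
    exact hc n
  obtain ⟨q, hq⟩ := hl
  refine ⟨q, ?_, ?_⟩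
  · rintro rfl
    have : (minpoly k⟮X⟯ z).map (algebraMap k⟮X⟯ F) = 0 := by rw [← hq]; simp
    rw [Polynomial.map_eq_zero] at this
    exact minpoly.ne_zero hzi this
  · have := minpoly.aeval k⟮X⟯ z
    rw [aeval_def, ← eval_map] at this ⊢
    rw [coe_mapRingHom] at hq
    rw [hq]; exact this

end P9

section P10
universe u
open IntermediateField

def GoodField (k : Type u) [Field k] : Prop :=
  ∀ (F : Type u) [Field F] [Algebra k F] [Algebra.IsAlgebraic k F] (A : Type u) [CommRing A]
    [Algebra.FiniteType ℤ A] (ι : A →+* F), Function.Injective ι → IsNoetherian ℤ (Additive Aˣ)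

/-- a f.g. ring inside `F` lies in a finitely generated intermediate field -/
lemma exists_fg_field {k F : Type*} [Field k] [Field F] [Algebra k F] {A : Type*} [CommRing A]
    [Algebra.FiniteType ℤ A] (ι : A →+* F) :
    ∃ S : Finset F, ∀ a, ι a ∈ IntermediateField.adjoin k (S : Set F) := by
  classical
  obtain ⟨s, hs⟩ := (inferInstance : Algebra.FiniteType ℤ A).out
  refine ⟨s.image ι, fun a => ?_⟩
  have ha : a ∈ Algebra.adjoin ℤ (s : Set A) := by rw [hs]; trivial
  induction ha using Algebra.adjoin_induction with
  | mem x hx => exact IntermediateField.subset_adjoin _ _ (by simpa using ⟨x, hx, rfl⟩)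
  | algebraMap r => simp
  | add x y _ _ hx hy => rw [map_add]; exact add_mem hx hy
  | mul x y _ _ hx hy => rw [map_mul]; exact mul_mem hx hy

lemma good_of_number (k : Type u) [Field k] [CharZero k] [Algebra.IsAlgebraic ℚ k] : GoodField k := by
  intro F _ _ _ A _ _ ι hι
  have : CharZero F := charZero_of_injective_algebraMap (algebraMap k F).injective
  have : Algebra.IsAlgebraic ℚ F := Algebra.IsAlgebraic.trans ℚ k F
  obtain ⟨S, hS⟩ := exists_fg_field (k := ℚ) ι
  have : FiniteDimensional ℚ (IntermediateField.adjoin ℚ (S : Set F)) :=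
    IntermediateField.finiteDimensional_adjoin (fun x _ => Algebra.IsIntegral.isIntegral x)
  have : NumberField (IntermediateField.adjoin ℚ (S : Set F)) := { to_charZero := inferInstance }
  refine numberField_units_noeth (K := IntermediateField.adjoin ℚ (S : Set F)) 
    (ι.codRestrict (IntermediateField.adjoin ℚ (S : Set F)) hS) ?_
  intro x y h
  exact hι (congrArg Subtype.val h)

lemma exists_fg_alg {k F : Type*} [Field k] [Field F] [Algebra k F] {A : Type*} [CommRing A]
    [Algebra.FiniteType ℤ A] (ι : A →+* F) :
    ∃ B : Subalgebra k F, Algebra.FiniteType k B ∧ ∀ a, ι a ∈ B := by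
  classical
  obtain ⟨s, hs⟩ := (inferInstance : Algebra.FiniteType ℤ A).out
  refine ⟨Algebra.adjoin k ((s.image ι : Finset F) : Set F),
    Subalgebra.fg_iff_finiteType _ |>.mp ⟨_, rfl⟩, ?_⟩
  intro a
  have ha : a ∈ Algebra.adjoin ℤ (s : Set A) := by rw [hs]; trivial
  induction ha using Algebra.adjoin_induction with
  | mem x hx => exact Algebra.subset_adjoin (by simpa using ⟨x, hx, rfl⟩)
  | algebraMap r => simp
  | add x y _ _ hx hy => rw [map_add]; exact add_mem hx hy
  | mul x y _ _ hx hy => rw [map_mul]; exact mul_mem hx hy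

/-- specialization -/
lemma exists_specialization {k : Type*} {F : Type u} [Field k] [Field F] [Algebra k F]
    {A : Type*} [CommRing A]
    [Algebra.FiniteType ℤ A] (ι : A →+* F) :
    ∃ (k' : Type u) (_ : Field k') (_ : Algebra k k') (_ : FiniteDimensional k k') (ψ : A →+* k'),
      ∀ x y, IsAlgebraic k (ι x) → IsAlgebraic k (ι y) → ψ x = ψ y → ι x = ι y := by
  classical
  obtain ⟨B, _, hB⟩ := exists_fg_alg (k := k) ι
  obtain ⟨M, hM⟩ := Ideal.exists_maximal B
  letI := Ideal.Quotient.field M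
  refine ⟨B ⧸ M, inferInstance, inferInstance,
    finite_of_finite_type_of_isJacobsonRing k (B ⧸ M),
    (Ideal.Quotient.mk M).comp (ι.codRestrict B hB), ?_⟩
  intro x y hx hy h
  by_contra hne
  have hz : IsAlgebraic k (ι x - ι y) := hx.sub hy
  have hz' : IsAlgebraic k (ι.codRestrict B hB x - ι.codRestrict B hB y) := by
    rw [← isAlgebraic_algebraMap_iff (A := F) (FaithfulSMul.algebraMap_injective B F)]
    exact hz
  have hu : IsUnit (ι.codRestrict B hB x - ι.codRestrict B hB y) := by
    refine IsIntegral.isUnit hz'.isIntegral ?_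
    intro h0
    exact hne (sub_eq_zero.mp (congrArg Subtype.val h0))
  have h2 : Ideal.Quotient.mk M (ι.codRestrict B hB x - ι.codRestrict B hB y) = 0 := by
    rw [map_sub]; exact sub_eq_zero.mpr h
  rw [Ideal.Quotient.eq_zero_iff_mem] at h2
  exact hM.ne_top (Ideal.eq_top_of_isUnit_mem _ h2 hu)

lemma fd_adjoin_of_mem {k M F : Type*} [Field k] [Field M] [Field F] [Algebra k M] [Algebra k F]
    [Algebra M F] [IsScalarTower k M F] [FiniteDimensional M F] (Y : F)
    (h : ∀ m : M, algebraMap M F m ∈ k⟮Y⟯) : FiniteDimensional k⟮Y⟯ F := by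
  letI : Algebra M k⟮Y⟯ := ((algebraMap M F).codRestrict k⟮Y⟯ h).toAlgebra
  haveI : IsScalarTower M k⟮Y⟯ F := IsScalarTower.of_algebraMap_eq (fun m => rfl)
  exact Module.Finite.of_restrictScalars_finite M k⟮Y⟯ F

lemma good_step {k M : Type u} [Field k] [CharZero k] [Field M] [Algebra k M] (x : M)
    (hx : k⟮x⟯ = ⊤) (hk : GoodField k) : GoodField M := by
  intro F0 _ _ _ A _ _ ι0 hι0
  by_cases hxa : IsAlgebraic k x
  · letI : Algebra k F0 := ((algebraMap M F0).comp (algebraMap k M)).toAlgebra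
    haveI : IsScalarTower k M F0 := IsScalarTower.of_algebraMap_eq (fun m => rfl)
    have h1 : Algebra.IsAlgebraic k k⟮x⟯ := IntermediateField.isAlgebraic_adjoin_simple hxa.isIntegral
    rw [hx] at h1
    have : Algebra.IsAlgebraic k M :=
      (IntermediateField.topEquiv (F := k) (E := M)).isAlgebraic
    have : Algebra.IsAlgebraic k F0 := Algebra.IsAlgebraic.trans k M F0
    exact hk F0 A ι0 hι0
  obtain ⟨S, hS⟩ := exists_fg_field (k := M) ι0
  set F := IntermediateField.adjoin M (S : Set F0) with hF
  have : FiniteDimensional M F :=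
    IntermediateField.finiteDimensional_adjoin (fun x _ => Algebra.IsIntegral.isIntegral x)
  let ι : A →+* F := ι0.codRestrict F hS
  have hι : Function.Injective ι := fun x y h => hι0 (congrArg Subtype.val h)
  clear_value ι
  clear_value F
  letI : Algebra k F := ((algebraMap M F).comp (algebraMap k M)).toAlgebra
  haveI : IsScalarTower k M F := IsScalarTower.of_algebraMap_eq (fun m => rfl)
  let Y : F := algebraMap M F x
  have hY : Transcendental k Y := by
    intro h
    exact hxa ((isAlgebraic_algebraMap_iff (algebraMap M F).injective).mp h)
  have hmem : ∀ m : M, algebraMap M F m ∈ k⟮Y⟯ := by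
    intro m
    have h1 : m ∈ k⟮x⟯ := by rw [hx]; trivial
    have h2 := IntermediateField.adjoin_map k {x} (IsScalarTower.toAlgHom k M F)
    rw [Set.image_singleton] at h2
    change _ ∈ IntermediateField.adjoin k {(IsScalarTower.toAlgHom k M F) x}
    rw [← h2]
    exact ⟨m, h1, rfl⟩
  have hYi : k⟮Y⟯ = k⟮Y⁻¹⟯ := by
    apply le_antisymm
    · rw [IntermediateField.adjoin_simple_le_iff]
      have := inv_mem (IntermediateField.mem_adjoin_simple_self k Y⁻¹)
      rwa [inv_inv] at this
    · rw [IntermediateField.adjoin_simple_le_iff]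
      exact inv_mem (IntermediateField.mem_adjoin_simple_self k Y)
  have hY2 : Transcendental k Y⁻¹ := fun h => hY (IsAlgebraic.inv_iff.mp h)
  have f1 : FiniteDimensional k⟮Y⟯ F := fd_adjoin_of_mem (M := M) Y hmem
  have f2 : FiniteDimensional k⟮Y⁻¹⟯ F := fd_adjoin_of_mem (M := M) Y⁻¹ (by rwa [← hYi])
  obtain ⟨S1, _, g1, hg1⟩ := funcField_units_hom hY ι
  obtain ⟨S2, _, g2, hg2⟩ := funcField_units_hom hY2 ι
  obtain ⟨k', _, _, _, ψ, hψ⟩ := exists_specialization (k := k) ι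
  have : Algebra.FiniteType ℤ ψ.range :=
    Algebra.FiniteType.of_surjective ψ.rangeRestrict.toIntAlgHom ψ.rangeRestrict_surjective
  have hN : IsNoetherian ℤ (Additive (ψ.range)ˣ) := 
    hk k' ψ.range ψ.range.subtype Subtype.val_injective
  refine noeth_of_homs (g1.prod g2) (MonoidHom.toAdditive (Units.map (ψ.rangeRestrict : A →* ψ.range))) ?_
  intro u hu1 hu2
  have e1 : g1 u = 0 := congrArg Prod.fst hu1
  have e2 : g2 u = 0 := congrArg Prod.snd hu1
  have ha : IsAlgebraic k (ι (u.toMul : Aˣ)) := algebraic_of_integral_both hY (hg1 u.toMul e1) (hg2 u.toMul e2)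
  have h3 : ψ (u.toMul : Aˣ) = ψ 1 := by
    have := congrArg (fun v : Additive (ψ.range)ˣ => ((v.toMul : (ψ.range)ˣ) : k')) hu2
    simpa using this
  have h4 := hι (hψ _ _ ha (by rw [map_one]; exact isAlgebraic_one) h3)
  apply Additive.toMul.injective
  exact Units.ext h4

theorem units_noeth (A : Type u) [CommRing A] [IsDomain A] [CharZero A] [Algebra.FiniteType ℤ A] :
    IsNoetherian ℤ (Additive Aˣ) := by
  let E := FractionRing A
  have : CharZero E := charZero_of_injective_algebraMap (IsFractionRing.injective A E)
  obtain ⟨S, hS⟩ := exists_fg_field (k := ℚ) (algebraMap A E)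
  have h : GoodField (IntermediateField.adjoin ℚ (S : Set E)) := by
    refine IntermediateField.induction_on_adjoin_finset S (fun K => GoodField K) ?_ ?_
    · have : Algebra.IsAlgebraic ℚ (⊥ : IntermediateField ℚ E) := inferInstance
      exact good_of_number _
    · intro K x _ hK
      refine good_step (k := K) (M := K⟮x⟯) (AdjoinSimple.gen K x) ?_ hK
      apply IntermediateField.map_injective K⟮x⟯.val
      rw [IntermediateField.adjoin_map, Set.image_singleton, ← AlgHom.fieldRange_eq_map,
        IntermediateField.fieldRange_val]
      rfl
  exact h (IntermediateField.adjoin ℚ (S : Set E)) A 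
    ((algebraMap A E).codRestrict (IntermediateField.adjoin ℚ (S : Set E)) hS)
    (fun x y h => IsFractionRing.injective A E (congrArg Subtype.val h))

end P10

section P11
universe u
open IntermediateField Polynomial

/-- generic nonunit -/
lemma exists_sub_mem_maximal {B : Type u} [CommRing B] [IsDomain B] [Algebra ℚ B] [Algebra.FiniteType ℚ B]
    (x : B) (hx : Transcendental ℚ x) :
    ∃ c : ℚ, c ≠ 0 ∧ c ≠ 1 ∧ c ≠ -1 ∧ ∃ M : Ideal B, M.IsMaximal ∧ x - algebraMap ℚ B c ∈ M := by
  classical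
  have hinj : Function.Injective (aeval (R := ℚ) x) := transcendental_iff_injective.mp hx
  have hfp : (aeval (R := ℚ) x).toRingHom.FinitePresentation := by
    refine RingHom.FinitePresentation.of_finiteType.mp ?_
    have h : (algebraMap ℚ B).FiniteType := RingHom.finiteType_algebraMap.mpr inferInstance
    have e : algebraMap ℚ B = (aeval (R := ℚ) x).toRingHom.comp (C : ℚ →+* ℚ[X]) := by
      ext; simp
    rw [e] at h
    exact RingHom.FiniteType.of_comp_finiteType h
  have hc := PrimeSpectrum.isConstructible_range_comap hfp
  obtain ⟨S, hS⟩ := PrimeSpectrum.exists_constructibleSetData_iff.mpr hc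
  have hbot : (⊥ : PrimeSpectrum ℚ[X]) ∈ S.toSet := by
    rw [hS]
    refine ⟨⊥, ?_⟩
    ext p
    simp [PrimeSpectrum.comap_asIdeal]
    exact map_eq_zero_iff _ hinj
  unfold PrimeSpectrum.ConstructibleSetData.toSet at hbot
  rw [Set.mem_iUnion₂] at hbot
  obtain ⟨D, hD, hD1, hD2⟩ := hbot
  have hg : ∀ i, D.g i = 0 := by
    intro i
    have := hD1 (Set.mem_range_self i)
    simpa using this
  have hf : D.f ≠ 0 := by
    intro h
    apply hD2
    simp [h]
  obtain ⟨c, hc⟩ := Infinite.exists_notMem_finset (D.f.roots.toFinset ∪ {0, 1, -1})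
  simp only [Finset.mem_union, Multiset.mem_toFinset, mem_roots hf, IsRoot.def, Finset.mem_insert,
    Finset.mem_singleton, not_or] at hc
  refine ⟨c, hc.2.1, hc.2.2.1, hc.2.2.2, ?_⟩
  have hpr : (Ideal.span {X - C c} : Ideal ℚ[X]).IsPrime := by
    rw [Ideal.span_singleton_prime (X_sub_C_ne_zero c)]
    exact prime_X_sub_C c
  have hmem : (⟨_, hpr⟩ : PrimeSpectrum ℚ[X]) ∈ S.toSet := by
    unfold PrimeSpectrum.ConstructibleSetData.toSet
    rw [Set.mem_iUnion₂]
    refine ⟨D, hD, ?_, ?_⟩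
    · rintro _ ⟨i, rfl⟩
      rw [hg i]
      exact Ideal.zero_mem _
    · intro h
      have := h (Set.mem_singleton _)
      have := Ideal.mem_span_singleton.mp this
      rw [dvd_iff_isRoot] at this
      exact hc.1 this
  rw [hS] at hmem
  obtain ⟨Q, hQ⟩ := hmem
  obtain ⟨M, hM, hQM⟩ := Ideal.exists_le_maximal Q.asIdeal Q.2.ne_top
  refine ⟨M, hM, hQM ?_⟩
  have h1 : (X - C c : ℚ[X]) ∈ (PrimeSpectrum.comap (aeval (R := ℚ) x).toRingHom Q).asIdeal := by
    rw [hQ]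
    exact Ideal.mem_span_singleton_self _
  simpa [PrimeSpectrum.comap_asIdeal] using h1

lemma nf_of_fd (K : Type*) [Field K] [Algebra ℚ K] [FiniteDimensional ℚ K] : NumberField K := by
  have : CharZero K := charZero_of_injective_algebraMap (algebraMap ℚ K).injective
  refine @NumberField.mk _ _ inferInstance ?_
  convert ‹FiniteDimensional ℚ K›
  exact Subsingleton.elim _ _

lemma exists_residue {k : Type*} {B : Type u} [Field k] [CommRing B] [Algebra k B]
    [Algebra.FiniteType k B] (M : Ideal B) [M.IsMaximal] :
    ∃ (k' : Type u) (_ : Field k') (_ : Algebra k k') (_ : FiniteDimensional k k') (ψ : B →ₐ[k] k'),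
      ∀ b ∈ M, ψ b = 0 := by
  letI := Ideal.Quotient.field M
  refine ⟨B ⧸ M, inferInstance, inferInstance,
    finite_of_finite_type_of_isJacobsonRing k (B ⧸ M), Ideal.Quotient.mkₐ k M, ?_⟩
  intro b hb
  exact Ideal.Quotient.eq_zero_iff_mem.mpr hb

lemma nontorsion_specialization (A : Type u) [CommRing A] [IsDomain A] [CharZero A]
    [Algebra.FiniteType ℤ A] (x : A) (hx : ∀ n : ℕ, 0 < n → x ^ n ≠ 1) :
    ∃ (K : Type u) (_ : Field K) (_ : NumberField K) (φ : A →+* K), 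
      ∀ n : ℕ, 0 < n → φ x ^ n ≠ 1 := by
  classical
  let F := FractionRing A
  have : CharZero F := charZero_of_injective_algebraMap (IsFractionRing.injective A F)
  have hiF := IsFractionRing.injective A F
  by_cases hxa : IsAlgebraic ℚ (algebraMap A F x)
  · obtain ⟨k', _, _, _, ψ, hψ⟩ := exists_specialization (k := ℚ) (algebraMap A F)
    refine ⟨k', inferInstance, nf_of_fd k', ψ, ?_⟩
    intro n hn h
    apply hx n hn
    apply hiF
    apply hψ
    · rw [map_pow]; exact hxa.pow n
    · rw [map_one]; exact isAlgebraic_one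
    · rw [map_pow, map_one, h]
  · obtain ⟨B, _, hB⟩ := exists_fg_alg (k := ℚ) (algebraMap A F)
    let ι := (algebraMap A F).codRestrict B hB
    have htr : Transcendental ℚ (ι x) := by
      intro h
      apply hxa
      rw [← isAlgebraic_algebraMap_iff (A := F) (FaithfulSMul.algebraMap_injective B F)] at h
      exact h
    obtain ⟨c, h0, h1, h2, M, hM, hc⟩ := exists_sub_mem_maximal (ι x) htr
    obtain ⟨k', _, _, _, ψ, hψ⟩ := exists_residue (k := ℚ) M
    refine ⟨k', inferInstance, nf_of_fd k', ψ.toRingHom.comp ι, ?_⟩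
    intro n hn h
    have e : ψ.toRingHom.comp ι x = algebraMap ℚ k' c := by
      have := hψ _ hc
      rw [map_sub, sub_eq_zero, AlgHom.commutes] at this
      exact this
    rw [e, ← map_pow, ← (algebraMap ℚ k').map_one] at h
    have h3 := (algebraMap ℚ k').injective h
    rcases pow_eq_one_iff_cases.mp h3 with h4 | h4 | h4
    · omega
    · exact h1 h4
    · exact h2 h4.1

theorem unit_eq_finite (A : Type u) [CommRing A] [IsDomain A] [CharZero A]
    [Algebra.FiniteType ℤ A] : {x : Aˣ | IsUnit (1 - (x : A))}.Finite := by
  have hN := units_noeth A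
  suffices H : ∀ (r : ℕ) (N : Submodule ℤ (Additive Aˣ)), Module.finrank ℤ N = r → ∀ g : Additive Aˣ,
      {x : Aˣ | IsUnit (1 - (x : A)) ∧ Additive.ofMul x - g ∈ N}.Finite by
    refine (H _ ⊤ rfl 0).subset ?_
    intro x hx
    exact ⟨hx, trivial⟩
  intro r
  induction r using Nat.strong_induction_on with
  | _ r ih =>
  intro N hr g
  by_cases hT : Module.IsTorsion ℤ N
  · have : Finite N := Module.finite_of_fg_torsion N hT
    have h1 : ((fun n : N => (n.1 + g).toMul) '' Set.univ).Finite := Set.toFinite _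
    refine h1.subset ?_
    rintro x ⟨_, hx⟩
    refine ⟨⟨_, hx⟩, trivial, ?_⟩
    simp
  · have h2 : ∃ y : N, ∀ n : ℤ, n ≠ 0 → n • y ≠ 0 := by
      by_contra hcon
      push Not at hcon
      apply hT
      intro y
      obtain ⟨n, hn, hy⟩ := hcon y
      exact ⟨⟨n, mem_nonZeroDivisors_of_ne_zero hn⟩, hy⟩
    obtain ⟨⟨y, hyN⟩, hy⟩ := h2
    obtain ⟨K, _, _, φ, hφ⟩ := nontorsion_specialization A (y.toMul : Aˣ) (by
      intro n hn h
      apply hy n (by exact_mod_cast hn.ne')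
      apply Subtype.ext
      apply Additive.toMul.injective
      apply Units.ext
      simpa using h)
    let f : Additive Aˣ →+ Additive Kˣ := MonoidHom.toAdditive (Units.map (φ : A →* K))
    let N' := N ⊓ f.toIntLinearMap.ker
    have hlt : Module.finrank ℤ N' < r := by
      let f' : N →ₗ[ℤ] Additive Kˣ := f.toIntLinearMap.comp N.subtype
      have e1 : Module.finrank ℤ N' = Module.finrank ℤ f'.ker := by
        have hle : f'.ker = N'.submoduleOf N := by
          ext n
          simp only [N', f', Submodule.submoduleOf]
          simp [Submodule.mem_inf]
          exact Iff.rfl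
        rw [hle]
        exact (LinearEquiv.finrank_eq (Submodule.submoduleOfEquivOfLe inf_le_left)).symm
      have e2 := Submodule.finrank_quotient_add_finrank f'.ker
      rw [LinearEquiv.finrank_eq f'.quotKerEquivRange] at e2
      have e3 : Module.finrank ℤ f'.range ≠ 0 := by
        intro h0
        rw [Module.finrank_eq_zero_iff_isTorsion] at h0
        obtain ⟨n, hn⟩ := @h0 ⟨f' ⟨y, hyN⟩, ⟨_, rfl⟩⟩
        have hn0 : (n : ℤ) ≠ 0 := nonZeroDivisors.ne_zero n.2
        have hn1 : (n : ℤ).natAbs • f y = 0 := by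
          have : (n : ℤ) • f y = 0 := congrArg Subtype.val hn
          rcases Int.natAbs_eq (n : ℤ) with h | h
          · rw [h] at this; simpa using this
          · rw [h] at this; simpa using this
        apply hφ _ (Int.natAbs_pos.mpr hn0)
        have := congrArg (fun v : Additive Kˣ => ((v.toMul : Kˣ) : K)) hn1
        simpa [f] using this
      omega
    have hfin := unit_eq_image_finite φ
    have hcov : {x : Aˣ | IsUnit (1 - (x : A)) ∧ Additive.ofMul x - g ∈ N} ⊆
        ⋃ z ∈ {y : K | ∃ x : Aˣ, ∃ x' : Aˣ, (x : A) + x' = 1 ∧ y = φ x},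
        {x : Aˣ | (IsUnit (1 - (x : A)) ∧ Additive.ofMul x - g ∈ N) ∧ φ x = z} := by
      intro x hx
      simp only [Set.mem_iUnion]
      refine ⟨φ x, ⟨x, hx.1.unit, ?_, rfl⟩, hx, rfl⟩
      simp
    refine (Set.Finite.biUnion hfin ?_).subset hcov
    intro z _
    by_cases hne : ∃ x0 : Aˣ, (Additive.ofMul x0 - g ∈ N) ∧ φ x0 = z
    · obtain ⟨x0, hx0, hz⟩ := hne
      refine (ih _ hlt N' rfl (Additive.ofMul x0)).subset ?_
      rintro x ⟨⟨hx1, hx2⟩, hx3⟩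
      refine ⟨hx1, ?_, ?_⟩
      · have := N.sub_mem hx2 hx0
        simpa using this
      · have : f (Additive.ofMul x) = f (Additive.ofMul x0) := by
          apply Additive.toMul.injective
          apply Units.ext
          simpa [f] using hx3.trans hz.symm
        simp [this, sub_eq_zero]
    · convert Set.finite_empty
      ext x
      simp only [Set.mem_ofPred_eq, Set.mem_empty_iff_false, iff_false]
      exact fun h => hne ⟨x, h.1.2, h.2⟩

end P11

section P12
universe u

lemma exists_finset_reps {α β : Type*} (f : α → β) (S : Set α) (h : (f '' S).Finite) :
    ∃ T : Finset α, (∀ t ∈ T, t ∈ S) ∧ ∀ x ∈ S, ∃ t ∈ T, f t = f x := by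
  classical
  by_cases hne : Nonempty α
  · refine ⟨h.toFinset.image (Function.invFunOn f S), ?_, ?_⟩
    · intro t ht
      simp only [Finset.mem_image, Set.Finite.mem_toFinset] at ht
      obtain ⟨_, ⟨x, hx, rfl⟩, rfl⟩ := ht
      exact Function.invFunOn_mem ⟨x, hx, rfl⟩
    · intro x hx
      refine ⟨Function.invFunOn f S (f x), ?_, Function.invFunOn_eq ⟨x, hx, rfl⟩⟩
      simp only [Finset.mem_image, Set.Finite.mem_toFinset]
      exact ⟨f x, ⟨x, hx, rfl⟩, rfl⟩
  · exact ⟨∅, by simp, fun x => (hne ⟨x⟩).elim⟩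

lemma ass_quot_span {A : Type*} [CommRing A] [IsNoetherianRing A] {e : A} {p : Ideal A} :
    p ∈ associatedPrimes A (A ⧸ Ideal.span {e}) ↔ p.IsPrime ∧ ∃ a : A, ∀ s, s ∈ p ↔ e ∣ s * a := by
  rw [AssociatedPrimes.mem_iff, isAssociatedPrime_iff]
  refine and_congr_right fun _ => ?_
  constructor
  · rintro ⟨x, rfl⟩
    obtain ⟨a, rfl⟩ := Ideal.Quotient.mk_surjective x
    refine ⟨a, fun s => ?_⟩
    rw [Submodule.mem_colon_singleton, Submodule.mem_bot, ← Ideal.mem_span_singleton,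
      ← Ideal.Quotient.eq_zero_iff_mem]
    rfl
  · rintro ⟨a, ha⟩
    refine ⟨Ideal.Quotient.mk _ a, ?_⟩
    ext s
    rw [ha, Submodule.mem_colon_singleton, Submodule.mem_bot, ← Ideal.mem_span_singleton,
      ← Ideal.Quotient.eq_zero_iff_mem]
    rfl


lemma ass_principal {A : Type u} [CommRing A] [IsDomain A] [IsIntegrallyClosed A] [IsNoetherianRing A]
    {e : A} (he : e ≠ 0) {p : Ideal A} [hp : p.IsPrime] {a : A} (ha : ∀ s, s ∈ p ↔ e ∣ s * a) :
    (IsLocalRing.maximalIdeal (Localization.AtPrime p)).IsPrincipal := by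
  have hpa : ∃ s ∈ p, ∃ b, s * a = e * b ∧ b ∉ p := by
    by_contra hcon
    push Not at hcon
    obtain ⟨F, _, _, _⟩ : ∃ (F : Type u) (_ : Field F) (_ : Algebra A F), IsFractionRing A F :=
      ⟨FractionRing A, inferInstance, inferInstance, inferInstance⟩
    have hinj := IsFractionRing.injective A F
    have he' : algebraMap A F e ≠ 0 := fun h => he (hinj (by rw [h, map_zero]))
    let w : F := algebraMap A F a / algebraMap A F e
    have hw : IsIntegral A w := by
      let N : Submodule A F := Submodule.map (Algebra.linearMap A F) p
      refine isIntegral_of_smul_mem_submodule (N := N) ?_ ?_ w ?_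
      · intro h
        have h1 : algebraMap A F e ∈ N := ⟨e, (ha e).mpr (dvd_mul_right _ _), rfl⟩
        rw [h] at h1
        exact he' h1
      · exact Submodule.FG.map _ (IsNoetherian.noetherian p)
      · rintro _ ⟨s, hs, rfl⟩
        obtain ⟨b, hb⟩ := (ha s).mp hs
        refine ⟨b, hcon s hs b hb, ?_⟩
        simp only [Algebra.linearMap_apply, w, smul_eq_mul]
        field_simp
        rw [← map_mul, ← map_mul, mul_comm a s, hb, mul_comm]
    obtain ⟨z, hz⟩ := IsIntegrallyClosed.isIntegral_iff.mp hw
    apply hp.ne_top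
    rw [Ideal.eq_top_iff_one, ha, one_mul]
    refine ⟨z, hinj ?_⟩
    rw [map_mul, hz]
    exact (mul_div_cancel₀ _ he').symm
  obtain ⟨π, hπ, t, ht, htp⟩ := hpa
  refine ⟨⟨algebraMap A _ π, ?_⟩⟩
  apply le_antisymm
  · rw [← Localization.AtPrime.map_eq_maximalIdeal, Ideal.map_le_iff_le_comap]
    intro s hs
    obtain ⟨b, hb⟩ := (ha s).mp hs
    have h1 : s * t = π * b := by
      apply mul_left_cancel₀ he
      calc e * (s * t) = s * (π * a) := by rw [ht]; ring
        _ = π * (s * a) := by ring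
        _ = _ := by rw [hb]; ring
    have hu : IsUnit (algebraMap A (Localization.AtPrime p) t) :=
      IsLocalization.map_units (Localization.AtPrime p) (⟨t, htp⟩ : p.primeCompl)
    rw [Ideal.mem_comap]
    change _ ∈ Ideal.span _
    rw [Ideal.mem_span_singleton, ← hu.dvd_mul_right, ← map_mul, h1, map_mul]
    exact dvd_mul_right _ _
  · rw [Submodule.span_singleton_le_iff_mem, ← Localization.AtPrime.map_eq_maximalIdeal]
    exact Ideal.mem_map_of_mem _ hπ

lemma finite_ideals_containing {R : Type*} [CommRing R] [IsDomain R] [IsNoetherianRing R] [IsLocalRing R]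
    (h : (IsLocalRing.maximalIdeal R).IsPrincipal) {e : R} (he : e ≠ 0) :
    {I : Ideal R | e ∈ I}.Finite := by
  obtain ⟨N, hN⟩ := exists_maximalIdeal_pow_eq_of_principal R h (Ideal.span {e}) 
    (by simpa [Ideal.span_singleton_eq_bot] using he)
  refine ((Set.finite_Iic N).image (fun n => IsLocalRing.maximalIdeal R ^ n)).subset ?_
  intro I hI
  have hI0 : I ≠ ⊥ := by rintro rfl; exact he hI
  obtain ⟨n, hn⟩ := exists_maximalIdeal_pow_eq_of_principal R h I hI0
  rcases le_total n N with h1 | h1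
  · exact ⟨n, h1, hn.symm⟩
  · refine ⟨N, le_refl N, ?_⟩
    apply le_antisymm
    · change IsLocalRing.maximalIdeal R ^ N ≤ I
      rw [← hN, Ideal.span_singleton_le_iff_mem]
      exact hI
    · rw [hn]; exact Ideal.pow_le_pow_right h1

theorem divisors_finite {A : Type*} [CommRing A] [IsDomain A] [IsIntegrallyClosed A]
    [IsNoetherianRing A] {e : A} (he : e ≠ 0) :
    ∃ T : Finset A, ∀ x, x ∣ e → ∃ t ∈ T, Associated t x := by
  classical
  let P := associatedPrimes A (A ⧸ Ideal.span {e})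
  have hP : P.Finite := associatedPrimes.finite _ _
  have : Finite P := hP
  let f : A → ((p : P) → Ideal (Localization.AtPrime p.1)) :=
    fun x p => Ideal.span {algebraMap A _ x}
  have hfin : (f '' {x | x ∣ e}).Finite := by
    have h1 : (Set.pi Set.univ (fun p : P => 
        {I : Ideal (Localization.AtPrime p.1) | algebraMap A _ e ∈ I})).Finite := by
      refine Set.Finite.pi fun p => ?_
      obtain ⟨hp, a, ha⟩ := ass_quot_span.mp p.2
      refine finite_ideals_containing (ass_principal he ha) ?_
      intro h0
      apply he
      exact IsLocalization.injective (Localization.AtPrime p.1) p.1.primeCompl_le_nonZeroDivisors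
        (by rw [h0, map_zero])
    refine h1.subset ?_
    rintro _ ⟨x, hx, rfl⟩ p _
    exact Ideal.mem_span_singleton.mpr (map_dvd _ hx)
  obtain ⟨T, hT1, hT2⟩ := exists_finset_reps f _ hfin
  refine ⟨T, fun x hx => ?_⟩
  have key : ∀ x x' : A, x ∣ e → f x' = f x → x ∣ x' := by
    intro x x' hxe hf
    by_contra hnd
    have hne : (Ideal.Quotient.mk (Ideal.span {x}) x') ≠ 0 := by
      rw [Ne, Ideal.Quotient.eq_zero_iff_mem, Ideal.mem_span_singleton]; exact hnd
    obtain ⟨p, hp, hle⟩ := exists_le_isAssociatedPrime_of_isNoetherianRing (R := A) _ hne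
    obtain ⟨hpp, a, ha⟩ := ass_quot_span.mp hp
    obtain ⟨y, hy⟩ := hxe
    have hy0 : y ≠ 0 := by rintro rfl; simp at hy; exact he hy
    have hpP : p ∈ P := ass_quot_span.mpr ⟨hpp, y * a, fun s => by
      rw [ha, hy, show s * (y * a) = (s * a) * y by ring, mul_dvd_mul_iff_right hy0]⟩
    have h1 := congrFun hf ⟨p, hpP⟩
    have h2 : algebraMap A (Localization.AtPrime p) x ∣ algebraMap A _ x' := by
      rw [← Ideal.mem_span_singleton]
      change _ ∈ f x ⟨p, hpP⟩
      rw [← h1]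
      exact Ideal.mem_span_singleton_self _
    obtain ⟨z, hz⟩ := h2
    obtain ⟨⟨b, s⟩, hs⟩ := IsLocalization.surj p.primeCompl z
    have h3 : s * x' = x * b := by
      apply IsLocalization.injective (Localization.AtPrime p) p.primeCompl_le_nonZeroDivisors
      rw [map_mul, map_mul, hz, ← hs]
      ring
    apply s.2
    apply hle
    rw [Submodule.mem_colon_singleton, Submodule.mem_bot]
    change Ideal.Quotient.mk _ (s * x') = 0
    rw [Ideal.Quotient.eq_zero_iff_mem, Ideal.mem_span_singleton, h3]
    exact dvd_mul_right _ _
  obtain ⟨t, ht, htx⟩ := hT2 x hx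
  exact ⟨t, ht, associated_of_dvd_dvd (key t x (hT1 t ht) htx.symm) (key x t hx htx)⟩

end P12

section P13
set_option linter.unusedSectionVars false
open Polynomial

section basic
variable {A K : Type*} [CommRing A] [CommRing K] [Algebra A K]

lemma AEquiv.symm {x y : K} (h : AEquiv A K x y) : AEquiv A K y x := by
  obtain ⟨u, a, rfl⟩ := h
  refine ⟨u⁻¹, -(↑u⁻¹ * a), ?_⟩
  have h1 : algebraMap A K (↑u⁻¹ : A) * algebraMap A K u = 1 := by
    rw [← map_mul]; simp
  rw [map_neg, map_mul]
  linear_combination (-x) * h1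

lemma AEquiv.trans {x y z : K} (h : AEquiv A K x y) (h' : AEquiv A K y z) : AEquiv A K x z := by
  obtain ⟨u, a, rfl⟩ := h
  obtain ⟨u', a', rfl⟩ := h'
  refine ⟨u' * u, u' * a + a', ?_⟩
  simp only [Units.val_mul, map_mul, map_add]
  ring
end basic

variable {A : Type*} [CommRing A] [IsDomain A] [IsIntegrallyClosed A]
  {L : Type*} [Field L] [Algebra A L] [IsFractionRing A L]
  {K : Type*} [Field K] [Algebra L K] [Algebra A K] [IsScalarTower A L K]
  {E : Type*} [Field E] [Algebra L E] [Algebra A E] [IsScalarTower A L E]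

lemma integral_base {x : L} (h : IsIntegral A (algebraMap L K x)) : ∃ a : A, algebraMap A L a = x :=
  IsIntegrallyClosed.isIntegral_iff.mp
    ((isIntegral_algebraMap_iff (FaithfulSMul.algebraMap_injective L K)).mp h)

lemma unit_base {x : L} (hx : x ≠ 0) (h : IsIntegral A (algebraMap L E x))
    (h' : IsIntegral A (algebraMap L E x⁻¹)) : ∃ u : Aˣ, algebraMap A L u = x := by
  obtain ⟨a, ha⟩ := integral_base h
  obtain ⟨b, hb⟩ := integral_base h'
  have hab : a * b = 1 := by
    apply IsFractionRing.injective A L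
    rw [map_mul, ha, hb, map_one, mul_inv_cancel₀ hx]
  exact ⟨⟨a, b, hab, by rw [mul_comm, hab]⟩, ha⟩

lemma quot_int (σ τ : K →ₐ[L] E) {α β : K} (hβ : IsIntegral A β)
    (hα : α ∈ Algebra.adjoin A {β}) :
    ∃ c : E, IsIntegral A c ∧ σ α - τ α = c * (σ β - τ β) := by
  rw [Algebra.adjoin_singleton_eq_range_aeval] at hα
  obtain ⟨f, rfl⟩ := hα
  let C := integralClosure A E
  let b1 : C := ⟨σ β, hβ.map (σ.restrictScalars A)⟩
  let b2 : C := ⟨τ β, hβ.map (τ.restrictScalars A)⟩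
  obtain ⟨c, hc⟩ := sub_dvd_eval_sub b1 b2 (f.map (algebraMap A C))
  refine ⟨c, c.2, ?_⟩
  have h1 : ((eval b1 (f.map (algebraMap A C)) : C) : E) = σ (aeval β f) := by
    rw [eval_map_algebraMap]
    have := aeval_algHom_apply (σ.restrictScalars A) β f
    have h2 := aeval_algHom_apply C.val b1 f
    exact h2.symm.trans this
  have h2 : ((eval b2 (f.map (algebraMap A C)) : C) : E) = τ (aeval β f) := by
    rw [eval_map_algebraMap]
    have := aeval_algHom_apply (τ.restrictScalars A) β f
    have h2 := aeval_algHom_apply C.val b2 f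
    exact h2.symm.trans this
  have := congrArg (Subtype.val) hc
  change σ (aeval β f) - τ (aeval β f) = _
  rw [← h1, ← h2, mul_comm]
  exact this

lemma ne_of_gen {σ τ : K →ₐ[L] E} (h : σ ≠ τ) {β : K} (hβ : Algebra.adjoin L {β} = ⊤) :
    σ β - τ β ≠ 0 := by
  intro h0
  apply h
  apply AlgHom.ext_of_adjoin_eq_top hβ
  rintro _ rfl
  exact sub_eq_zero.mp h0

lemma gen_of_adjoin_eq {α β : K} (hβ : Algebra.adjoin L {β} = ⊤)
    (h : Algebra.adjoin A {α} = Algebra.adjoin A {β}) : Algebra.adjoin L {α} = ⊤ := by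
  rw [← top_le_iff, ← hβ]
  apply Algebra.adjoin_le
  rw [Set.singleton_subset_iff]
  have h1 : β ∈ Algebra.adjoin A {α} := by rw [h]; exact Algebra.self_mem_adjoin_singleton A β
  have h2 : Algebra.adjoin A {α} ≤ (Algebra.adjoin L {α}).restrictScalars A := by
    apply Algebra.adjoin_le
    exact Algebra.subset_adjoin
  exact h2 h1

/-- A good pair. -/
def GPair (A L : Type*) {K : Type*} [CommRing A] [Field L] [Field K] [Algebra L K] [Algebra A K]
    (β α : K) : Prop :=
  IsIntegral A β ∧ Algebra.adjoin L {β} = ⊤ ∧ Algebra.adjoin A {α} = Algebra.adjoin A {β} ∧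
    ¬ AEquiv A K α β

lemma GPair.int {β α : K} (h : GPair A L β α) : IsIntegral A α := by
  have h1 : α ∈ Algebra.adjoin A {β} := by
    rw [← h.2.2.1]; exact Algebra.self_mem_adjoin_singleton A α
  have h2 : Algebra.adjoin A {β} ≤ integralClosure A K := by
    apply Algebra.adjoin_le
    rintro _ rfl
    exact h.1
  exact h2 h1

lemma GPair.gen {β α : K} (h : GPair A L β α) : Algebra.adjoin L {α} = ⊤ :=
  gen_of_adjoin_eq h.2.1 h.2.2.1

/-- difference quotients are units -/
lemma GPair.quot {β α : K} (h : GPair A L β α) {σ τ : K →ₐ[L] E} (hne : σ ≠ τ) :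
    IsIntegral A ((σ α - τ α) / (σ β - τ β)) ∧ IsIntegral A ((σ β - τ β) / (σ α - τ α)) := by
  have hb := ne_of_gen hne h.2.1
  have ha := ne_of_gen hne h.gen
  constructor
  · obtain ⟨c, hc, e⟩ := quot_int σ τ (α := α) h.1 (by
      rw [← h.2.2.1]; exact Algebra.self_mem_adjoin_singleton A α)
    rw [e, mul_div_cancel_right₀ _ hb]; exact hc
  · obtain ⟨c, hc, e⟩ := quot_int σ τ (α := β) h.int (by
      rw [h.2.2.1]; exact Algebra.self_mem_adjoin_singleton A β)
    rw [e, mul_div_cancel_right₀ _ ha]; exact hc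

lemma aequiv_of_unit {u : Aˣ} {a : L} {x y : K} (hx : IsIntegral A x) (hy : IsIntegral A y)
    (h : y = algebraMap A K u * x + algebraMap L K a) : AEquiv A K x y := by
  have h1 : IsIntegral A (algebraMap L K a) := by
    have : algebraMap L K a = y - algebraMap A K u * x := by rw [h]; ring
    rw [this]
    exact hy.sub (isIntegral_algebraMap.mul hx)
  obtain ⟨b, rfl⟩ := integral_base h1
  exact ⟨u, b, by rw [h, ← IsScalarTower.algebraMap_apply]⟩

/-- not `L`-equivalent -/
lemma GPair.not_lin {β α : K} (h : GPair A L β α) {σ τ : K →ₐ[L] E} (hne : σ ≠ τ) (u a : L) :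
    α ≠ algebraMap L K u * β + algebraMap L K a := by
  intro e
  have hb := ne_of_gen hne h.2.1
  have ha := ne_of_gen hne h.gen
  have e1 : (σ α - τ α) = algebraMap L E u * (σ β - τ β) := by
    rw [e]; simp only [map_add, map_mul, AlgHom.commutes]; ring
  have hu : u ≠ 0 := by
    rintro rfl
    rw [map_zero, zero_mul] at e1
    exact ha e1
  have hq := h.quot hne
  have hu' : algebraMap L E u ≠ 0 := by simpa using hu
  obtain ⟨w, hw⟩ := unit_base (A := A) (E := E) hu
    (by have := hq.1; rwa [e1, mul_div_cancel_right₀ _ hb] at this)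
    (by
      have := hq.2
      rwa [e1, div_mul_cancel_right₀ hb, ← map_inv₀] at this)
  refine h.2.2.2 (AEquiv.symm (aequiv_of_unit (u := w) (a := a) h.1 h.int ?_))
  rw [e, IsScalarTower.algebraMap_apply A L K, hw]

end P13

section P14
set_option linter.unusedSectionVars false

variable {L : Type*} [Field L] {K : Type*} [Field K] [Algebra L K]
  {E : Type*} [Field E] [Algebra L E]

/-- the pattern function -/
noncomputable def patt (E : Type*) [Field E] [Algebra L E] (α : K) :
    (K →ₐ[L] E) × (K →ₐ[L] E) × (K →ₐ[L] E) → E :=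
  fun p => (p.1 α - p.2.1 α) / (p.1 α - p.2.2 α)

lemma lin_of_pattern [FiniteDimensional L E] [IsGalois L E] {α α' : K}
    (hα : Algebra.adjoin L {α} = ⊤) (hα' : Algebra.adjoin L {α'} = ⊤)
    {σ0 τ0 : K →ₐ[L] E} (h0 : σ0 ≠ τ0) (h : patt E (L := L) α = patt E α') :
    ∃ v b : L, v ≠ 0 ∧ α' = algebraMap L K v * α + algebraMap L K b := by
  have hV : ∀ σ τ ρ : K →ₐ[L] E, σ ≠ τ → σ ≠ ρ →
      (σ α' - τ α') / (σ α - τ α) = (σ α' - ρ α') / (σ α - ρ α) := by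
    intro σ τ ρ h1 h2
    have := congrFun h (σ, τ, ρ)
    simp only [patt] at this
    have a1 := ne_of_gen h1 hα
    have a2 := ne_of_gen h2 hα
    have a3 := ne_of_gen h2 hα'
    rw [div_eq_div_iff a2 a3] at this
    rw [div_eq_div_iff a1 a2]
    linear_combination -this
  have hsymm : ∀ σ τ : K →ₐ[L] E, 
      (σ α' - τ α') / (σ α - τ α) = (τ α' - σ α') / (τ α - σ α) := by
    intro σ τ
    rw [← neg_sub (τ α'), ← neg_sub (τ α), neg_div_neg_eq]
  set V0 := (σ0 α' - τ0 α') / (σ0 α - τ0 α) with hV0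
  have hconst : ∀ σ τ : K →ₐ[L] E, σ ≠ τ → (σ α' - τ α') / (σ α - τ α) = V0 := by
    intro σ τ hne
    by_cases hs : σ = σ0
    · subst hs
      exact hV _ _ _ hne h0
    · rw [hV σ τ σ0 hne hs, hsymm]
      exact hV _ _ _ (Ne.symm hs) h0
  have hfix : ∀ g : E ≃ₐ[L] E, g V0 = V0 := by
    intro g
    have h1 := hconst ((g : E →ₐ[L] E).comp σ0) ((g : E →ₐ[L] E).comp τ0) (by
      intro e
      apply h0
      ext x
      have := DFunLike.congr_fun e x
      simpa using this)
    refine Eq.trans ?_ h1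
    rw [hV0]
    simp
  obtain ⟨v, hv⟩ := (IsGalois.mem_range_algebraMap_iff_fixed (F := L) V0).mpr hfix
  have hy : ∀ σ τ : K →ₐ[L] E, σ (α' - algebraMap L K v * α) = τ (α' - algebraMap L K v * α) := by
    intro σ τ
    by_cases hne : σ = τ
    · rw [hne]
    · have := hconst σ τ hne
      rw [div_eq_iff (ne_of_gen hne hα), ← hv] at this
      simp only [map_sub, map_mul, AlgHom.commutes]
      linear_combination this
  obtain ⟨b, hb⟩ := (IsGalois.mem_range_algebraMap_iff_fixed (F := L)
    (σ0 (α' - algebraMap L K v * α))).mpr (fun g => hy ((g : E →ₐ[L] E).comp σ0) σ0)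
  refine ⟨v, b, ?_, ?_⟩
  · rintro rfl
    rw [map_zero] at hv
    exact div_ne_zero (ne_of_gen h0 hα') (ne_of_gen h0 hα) hv.symm
  · rw [← AlgHom.commutes σ0] at hb
    rw [σ0.injective hb]; ring

variable {A : Type*} [CommRing A] [IsDomain A] [IsIntegrallyClosed A]
  [Algebra A L] [IsFractionRing A L] [Algebra A K] [IsScalarTower A L K]
  [Algebra A E] [IsScalarTower A L E]

lemma pattern_finite [CharZero L] [Algebra.FiniteType ℤ A] [FiniteDimensional L K]
    [FiniteDimensional L E] (γ0 : K) :
    {p | ∃ β α : K, GPair A L β α ∧ LEquiv L K β γ0 ∧ patt (L := L) E α = p}.Finite := by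
  classical
  have : CharZero E := charZero_of_injective_algebraMap (algebraMap L E).injective
  have : IsNoetherianRing A := Algebra.FiniteType.isNoetherianRing ℤ A
  let C := integralClosure A E
  have : Module.Finite A C := IsIntegralClosure.finite A L E C
  have : Algebra.FiniteType ℤ C := Algebra.FiniteType.trans (S := A) inferInstance inferInstance
  let θ : (K →ₐ[L] E) × (K →ₐ[L] E) → E := fun p => p.1 γ0 - p.2 γ0
  let T : Set E := Set.range θ ∪ Set.range (fun p => (θ p)⁻¹)
  have hT : T.Finite := (Set.finite_range _).union (Set.finite_range _)
  let R := Algebra.adjoin C T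
  have : Algebra.FiniteType C R := (Subalgebra.fg_iff_finiteType _).mp
    (Subalgebra.fg_adjoin_finset hT.toFinset |> fun h => by simpa using h)
  have : Algebra.FiniteType ℤ R := Algebra.FiniteType.trans (S := C) inferInstance inferInstance
  have : CharZero R := inferInstance
  have hfin := unit_eq_finite R
  let U : Set E := insert 0 (insert 1 ((fun x : Rˣ => ((x : R) : E)) '' {x : Rˣ | IsUnit (1 - (x : R))}))
  have hU : U.Finite := ((hfin.image _).insert _).insert _
  apply (Set.Finite.pi (fun _ : (K →ₐ[L] E) × (K →ₐ[L] E) × (K →ₐ[L] E) => hU)).subset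
  rintro p ⟨β, α, hg, ⟨u, a, hu, hγ⟩, rfl⟩
  have hIntg : ∀ x : E, IsIntegral A x → x ∈ R := fun x hx =>
    Subalgebra.algebraMap_mem R (⟨x, hx⟩ : C)
  -- unit quotient
  have hu' : algebraMap L E u ≠ 0 := by simpa using hu
  have hθ : ∀ σ τ : K →ₐ[L] E, θ (σ, τ) = algebraMap L E u * (σ β - τ β) := by
    intro σ τ
    simp only [θ, hγ, map_add, map_mul, AlgHom.commutes]; ring
  have key : ∀ σ τ σ' τ' : K →ₐ[L] E, σ ≠ τ → σ' ≠ τ' → (σ α - τ α) / (σ' α - τ' α) ∈ R := by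
    intro σ τ σ' τ' h1 h2
    have b1 := ne_of_gen h1 hg.2.1
    have b2 := ne_of_gen h2 hg.2.1
    have a1 := ne_of_gen h1 hg.gen
    have a2 := ne_of_gen h2 hg.gen
    have e : (σ α - τ α) / (σ' α - τ' α) = ((σ α - τ α) / (σ β - τ β)) *
        ((σ' β - τ' β) / (σ' α - τ' α)) * (θ (σ, τ) * (θ (σ', τ'))⁻¹) := by
      rw [hθ, hθ]; field_simp
    rw [e]
    refine mul_mem (mul_mem (hIntg _ (hg.quot h1).1) (hIntg _ (hg.quot h2).2)) (mul_mem ?_ ?_)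
    · exact Algebra.subset_adjoin (Or.inl ⟨_, rfl⟩)
    · exact Algebra.subset_adjoin (Or.inr ⟨_, rfl⟩)
  rintro ⟨σ, τ, ρ⟩ -
  simp only [patt, U]
  by_cases h1 : σ = τ
  · left; simp [h1]
  by_cases h2 : σ = ρ
  · left; simp [h2]
  by_cases h3 : τ = ρ
  · right; left; rw [h3]; exact div_self (ne_of_gen h2 hg.gen)
  right; right
  have a1 := ne_of_gen h1 hg.gen
  have a2 := ne_of_gen h2 hg.gen
  have a3 := ne_of_gen h3 hg.gen
  refine ⟨⟨⟨_, key σ τ σ ρ h1 h2⟩, ⟨_, key σ ρ σ τ h2 h1⟩, ?_, ?_⟩, ?_, rfl⟩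
  · apply Subtype.ext
    change (σ α - τ α) / (σ α - ρ α) * ((σ α - ρ α) / (σ α - τ α)) = 1
    field_simp
  · apply Subtype.ext
    change (σ α - ρ α) / (σ α - τ α) * ((σ α - τ α) / (σ α - ρ α)) = 1
    field_simp
  · refine IsUnit.of_mul_eq_one ⟨_, key σ ρ τ ρ h2 h3⟩ ?_
    apply Subtype.ext
    change (1 - (σ α - τ α) / (σ α - ρ α)) * ((σ α - ρ α) / (τ α - ρ α)) = 1
    field_simp
    ring

end P14

section P15
set_option linter.unusedSectionVars false
open Polynomial

variable {A : Type*} [CommRing A] [IsDomain A] [IsIntegrallyClosed A]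
  {L : Type*} [Field L] [Algebra A L] [IsFractionRing A L]
  {K : Type*} [Field K] [Algebra L K] [Algebra A K] [IsScalarTower A L K]
  {E : Type*} [Field E] [Algebra L E] [Algebra A E] [IsScalarTower A L E]

lemma natDegree_gen [FiniteDimensional L K] {β : K} (h : Algebra.adjoin L {β} = ⊤) :
    (minpoly L β).natDegree = Module.finrank L K := by
  rw [← Field.primitive_element_iff_minpoly_natDegree_eq]
  exact Eq.symm (IntermediateField.eq_adjoin_of_eq_algebra_adjoin L {β} ⊤ h.symm)

lemma poly_unique [FiniteDimensional L K] {β : K} (h : Algebra.adjoin L {β} = ⊤) {P Q : L[X]}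
    (hP : P.natDegree < Module.finrank L K) (hQ : Q.natDegree < Module.finrank L K)
    (e : aeval β P = aeval β Q) : P = Q := by
  by_contra hne
  have h1 := minpoly.degree_le_of_ne_zero L β (sub_ne_zero.mpr hne) (by rw [map_sub, e, sub_self])
  have h2 := natDegree_le_natDegree h1
  rw [natDegree_gen h] at h2
  have h3 := natDegree_sub_le P Q
  have := max_lt hP hQ
  omega

lemma exists_poly [FiniteDimensional L K] {β α : K} (hβ : IsIntegral A β)
    (h : Algebra.adjoin L {β} = ⊤)
    (hα : α ∈ Algebra.adjoin A {β}) :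
    ∃ f : A[X], aeval β f = α ∧ f.natDegree < Module.finrank L K := by
  rw [Algebra.adjoin_singleton_eq_range_aeval] at hα
  obtain ⟨f, rfl⟩ := hα
  refine ⟨f %ₘ minpoly A β, ?_, ?_⟩
  · have := modByMonic_add_div f (minpoly A β)
    conv_rhs => rw [← this]
    simp
  · rw [← natDegree_gen h, minpoly.isIntegrallyClosed_eq_field_fractions' L hβ,
      (minpoly.monic hβ).natDegree_map]
    exact natDegree_modByMonic_lt _ (minpoly.monic hβ) (minpoly.ne_one A β)

lemma GPair.compare [FiniteDimensional L K] {β' α' : K} (h' : GPair A L β' α')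
    {σ τ : K →ₐ[L] E} (hne : σ ≠ τ) [Algebra.IsAlgebraic L E] :
    ∃ e t : A, e ≠ 0 ∧ t ≠ 0 ∧ ∀ β α : K, GPair A L β α → ∀ u a v b : L, u ≠ 0 → v ≠ 0 →
      β = algebraMap L K u * β' + algebraMap L K a →
      α = algebraMap L K v * α' + algebraMap L K b →
      ∃ w : A, w ∣ e ∧ algebraMap A L w = u * algebraMap A L t := by
  have hθ := ne_of_gen hne h'.2.1
  have hθα := ne_of_gen hne h'.gen
  obtain ⟨g, hg, hgd⟩ := exists_poly (L := L) (α := α') h'.1 h'.2.1 (by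
      rw [← h'.2.2.1]; exact Algebra.self_mem_adjoin_singleton A α')
  have hd : 2 ≤ g.natDegree := by
    by_contra hlt
    obtain ⟨x, y, hxy⟩ := exists_eq_X_add_C_of_natDegree_le_one (p := g) (by omega)
    apply h'.not_lin hne (algebraMap A L x) (algebraMap A L y)
    rw [← hg, hxy]
    simp [← IsScalarTower.algebraMap_apply]
  have hinj : Function.Injective (algebraMap A L) := IsFractionRing.injective A L
  have hIntg : ∀ x : K, IsIntegral A x → IsIntegral A (σ x - τ x) := fun x hx =>
    (hx.map (σ.restrictScalars A)).sub (hx.map (τ.restrictScalars A))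
  let C' := integralClosure A E
  have hAC : Function.Injective (algebraMap A E) := by
    rw [IsScalarTower.algebraMap_eq A L E]
    exact (algebraMap L E).injective.comp hinj
  let θ : C' := ⟨σ β' - τ β', hIntg _ h'.1⟩
  have hθ0 : θ ≠ 0 := fun h => hθ (congrArg Subtype.val h)
  have hθi : IsIntegral A θ := integralClosure.isIntegral θ
  obtain ⟨t, ht, s, hs⟩ := IsAlgebraic.exists_nonzero_dvd hθi.isAlgebraic
    (mem_nonZeroDivisors_of_ne_zero hθ0)
  have hs' : algebraMap A E t = (σ β' - τ β') * s := congrArg Subtype.val hs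
  have hg0 : g ≠ 0 := by rintro rfl; simp at hd
  refine ⟨g.leadingCoeff * t ^ (g.natDegree - 1), t,
    mul_ne_zero (leadingCoeff_ne_zero.mpr hg0) (pow_ne_zero _ ht), ht, ?_⟩
  intro β α h u a v b hu hv hβ hα
  have hu' : algebraMap L E u ≠ 0 := by simpa using hu
  have hv' : algebraMap L E v ≠ 0 := by simpa using hv
  have e1 : σ β - τ β = algebraMap L E u * (σ β' - τ β') := by
    rw [hβ]; simp only [map_add, map_mul, AlgHom.commutes]; ring
  have e2 : σ α - τ α = algebraMap L E v * (σ α' - τ α') := by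
    rw [hα]; simp only [map_add, map_mul, AlgHom.commutes]; ring
  -- w
  obtain ⟨w, hw⟩ := integral_base (A := A) (K := E) (x := u * algebraMap A L t) (by
    rw [map_mul, ← IsScalarTower.algebraMap_apply, hs', ← mul_assoc, ← e1]
    exact (hIntg _ h.1).mul s.2)
  refine ⟨w, ?_, hw⟩
  -- unit v / u
  have q := h.quot hne
  have q' := h'.quot hne
  obtain ⟨η, hη⟩ := unit_base (A := A) (E := E) (x := v / u) (div_ne_zero hv hu) (by
    have := q.1.mul q'.2
    rw [e1, e2] at this
    have e3 : algebraMap L E (v / u) = algebraMap L E v * (σ α' - τ α') /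
        (algebraMap L E u * (σ β' - τ β')) * ((σ β' - τ β') / (σ α' - τ α')) := by
      rw [map_div₀]; field_simp
    rw [e3]; exact this) (by
    have := q.2.mul q'.1
    rw [e1, e2] at this
    have e3 : algebraMap L E (v / u)⁻¹ = algebraMap L E u * (σ β' - τ β') /
        (algebraMap L E v * (σ α' - τ α')) * ((σ α' - τ α') / (σ β' - τ β')) := by
      rw [map_inv₀, map_div₀]; field_simp
    rw [e3]; exact this)
  rw [eq_div_iff hu] at hη
  obtain ⟨f, hf, hfd⟩ := exists_poly (L := L) (α := α) h.1 h.2.1 (by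
      rw [← h.2.2.1]; exact Algebra.self_mem_adjoin_singleton A α)
  have hlin : (C u * X + C a : L[X]).natDegree = 1 := natDegree_linear hu
  have hmapd : ∀ p : A[X], (p.map (algebraMap A L)).natDegree = p.natDegree :=
    fun p => natDegree_map_eq_of_injective hinj p
  have hrd : (C v * g.map (algebraMap A L) + C b).natDegree = g.natDegree := by
    rw [natDegree_add_C, natDegree_C_mul hv, hmapd]
  have hcompd : ((f.map (algebraMap A L)).comp (C u * X + C a)).natDegree = f.natDegree := by
    rw [natDegree_comp, hlin, mul_one, hmapd]
  have hpoly : (f.map (algebraMap A L)).comp (C u * X + C a) =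
      C v * g.map (algebraMap A L) + C b := by
    apply poly_unique h'.2.1
    · rwa [hcompd]
    · rwa [hrd]
    · rw [aeval_comp]
      simp only [map_add, map_mul, aeval_C, aeval_X, aeval_map_algebraMap, hg]
      rw [← hβ, hf, hα]
  have hdd : f.natDegree = g.natDegree := by rw [← hcompd, hpoly, hrd]
  have hlc := congrArg leadingCoeff hpoly
  rw [leadingCoeff_comp (by rw [hlin]; exact one_ne_zero), hmapd, leadingCoeff_linear hu,
    leadingCoeff_map_of_injective hinj, hdd] at hlc
  have hlc2 : (C v * g.map (algebraMap A L) + C b).leadingCoeff =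
      v * algebraMap A L g.leadingCoeff := by
    rw [leadingCoeff, hrd, coeff_add, coeff_C_mul, coeff_map, coeff_C,
      if_neg (by omega), add_zero]
    rfl
  rw [hlc2, ← hη] at hlc
  obtain ⟨k, hk⟩ : ∃ k, g.natDegree = k + 2 := ⟨g.natDegree - 2, by omega⟩
  rw [hk] at hlc ⊢
  have hlc3 : algebraMap A L f.leadingCoeff * u ^ (k + 1) =
      algebraMap A L η * algebraMap A L g.leadingCoeff := by
    apply mul_right_cancel₀ hu
    linear_combination hlc
  have hfin : f.leadingCoeff * w ^ (k + 1) = η * (g.leadingCoeff * t ^ (k + 1)) := by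
    apply hinj
    simp only [map_mul, map_pow, hw]
    rw [mul_pow]
    linear_combination (algebraMap A L t) ^ (k + 1) * hlc3
  have hdvd : w ∣ η * (g.leadingCoeff * t ^ (k + 1)) := by
    rw [← hfin]
    exact Dvd.dvd.mul_left (dvd_pow_self w (by omega)) _
  exact (Units.dvd_mul_left).mp hdvd

end P15

section P16
set_option linter.unusedSectionVars false

variable {A : Type*} [CommRing A] [IsDomain A] [IsIntegrallyClosed A]
  {L : Type*} [Field L] [Algebra A L] [IsFractionRing A L]
  {K : Type*} [Field K] [Algebra L K] [Algebra A K] [IsScalarTower A L K]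
  {E : Type*} [Field E] [Algebra L E] [Algebra A E] [IsScalarTower A L E]

lemma LEquiv.symm' {x y : K} (h : LEquiv L K x y) : LEquiv L K y x := by
  obtain ⟨u, a, hu, rfl⟩ := h
  have hu' : algebraMap L K u ≠ 0 := by simpa using hu
  refine ⟨u⁻¹, -(u⁻¹ * a), inv_ne_zero hu, ?_⟩
  rw [map_neg, map_mul, map_inv₀]
  field_simp
  ring

lemma LEquiv.trans' {x y z : K} (h : LEquiv L K x y) (h' : LEquiv L K y z) : LEquiv L K x z := by
  obtain ⟨u, a, hu, rfl⟩ := h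
  obtain ⟨u', a', hu', rfl⟩ := h'
  refine ⟨u' * u, u' * a + a', mul_ne_zero hu' hu, ?_⟩
  simp only [map_mul, map_add]
  ring

/-- For fixed pattern, finitely many classes. -/
lemma finite_for_pattern [IsNoetherianRing A] [FiniteDimensional L K] [FiniteDimensional L E]
    [IsGalois L E] {β' α' : K} (h' : GPair A L β' α') {σ τ : K →ₐ[L] E} (hne : σ ≠ τ) :
    ∃ s : Finset K, ∀ β α : K, GPair A L β α → LEquiv L K β' β →
      patt (L := L) E α' = patt E α → ∃ γ ∈ s, AEquiv A K β γ := by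
  classical
  obtain ⟨e, t, he, ht, H⟩ := h'.compare hne
  obtain ⟨T, hT⟩ := divisors_finite he
  let S : Set K := {β | ∃ α, GPair A L β α ∧ LEquiv L K β' β ∧ patt (L := L) E α' = patt E α}
  have hS : ∀ β ∈ S, ∃ x ∈ T, ∃ (w : A) (u a : L), Associated x w ∧ 
      algebraMap A L w = u * algebraMap A L t ∧
      β = algebraMap L K u * β' + algebraMap L K a := by
    rintro β ⟨α, hg, ⟨u, a, hu, hβ⟩, hp⟩
    obtain ⟨v, b, hv, hα⟩ := lin_of_pattern h'.gen hg.gen hne hp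
    obtain ⟨w, hw, hw'⟩ := H β α hg u a v b hu hv hβ hα
    obtain ⟨x, hx, hxw⟩ := hT w hw
    exact ⟨x, hx, w, u, a, hxw, hw', hβ⟩
  let f : K → A := fun β => if h : β ∈ S then (hS β h).choose else 0
  have hf : ∀ β (h : β ∈ S), f β = (hS β h).choose := fun β h => dif_pos h
  obtain ⟨T1, hT1, hT2⟩ := exists_finset_reps f S (T.finite_toSet.subset (by
    rintro _ ⟨β, hβ, rfl⟩
    rw [hf β hβ]
    exact (hS β hβ).choose_spec.1))
  refine ⟨T1, fun β α hg hl hp => ?_⟩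
  have hβ : β ∈ S := ⟨α, hg, hl, hp⟩
  obtain ⟨γ, hγ, hfe⟩ := hT2 β hβ
  refine ⟨γ, hγ, ?_⟩
  have hγS := hT1 γ hγ
  obtain ⟨_, w1, u1, a1, hx1, hw1, hb1⟩ := (hS β hβ).choose_spec
  obtain ⟨_, w2, u2, a2, hx2, hw2, hb2⟩ := (hS γ hγS).choose_spec
  rw [← hf β hβ] at hx1
  rw [← hf γ hγS] at hx2
  rw [hfe] at hx2
  obtain ⟨η, hη⟩ := hx1.symm.trans hx2
  have htL : algebraMap A L t ≠ 0 := by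
    simpa using ht
  have hu : u2 = algebraMap A L η * u1 := by
    apply mul_right_cancel₀ htL
    rw [← hw2, ← hη, map_mul, hw1]; ring
  obtain ⟨α2, hg2, _, _⟩ := hγS
  refine aequiv_of_unit (u := η) (a := a2 - algebraMap A L η * a1) hg.1 hg2.1 ?_
  rw [hb2, hb1, hu, IsScalarTower.algebraMap_apply A L K]
  simp only [map_sub, map_mul]
  ring

lemma exists_gpair {β : K} (h1 : IsIntegral A β) (h2 : Algebra.adjoin L {β} = ⊤)
    (h : TimesMonogenic A K 2 (Algebra.adjoin A {β})) : ∃ α, GPair A L β α := by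
  obtain ⟨f, hf, hf'⟩ := h
  by_cases h0 : AEquiv A K (f 0) β
  · refine ⟨f 1, h1, h2, hf' 1, fun h3 => ?_⟩
    exact hf 0 1 (by decide) (h0.trans h3.symm)
  · exact ⟨f 0, h1, h2, hf' 0, h0⟩

lemma main_aux [CharZero L] [Algebra.FiniteType ℤ A] [FiniteDimensional L K]
    [FiniteDimensional L E] [IsGalois L E] {σ τ : K →ₐ[L] E} (hne : σ ≠ τ) (γ0 : K) :
    ∃ s : Finset K, ∀ β : K, IsIntegral A β → LEquiv L K β γ0 →
      Algebra.adjoin L {β} = ⊤ →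
      TimesMonogenic A K 2 (Algebra.adjoin A {β}) →
      ∃ γ ∈ s, AEquiv A K β γ := by
  classical
  have : IsNoetherianRing A := Algebra.FiniteType.isNoetherianRing ℤ A
  let S : Set (K × K) := {p | GPair A L p.1 p.2 ∧ LEquiv L K p.1 γ0}
  obtain ⟨T, hT, hT'⟩ := exists_finset_reps (fun p : K × K => patt (L := L) E p.2) S
    ((pattern_finite (A := A) (E := E) (L := L) γ0).subset (by
      rintro _ ⟨p, hp, rfl⟩
      exact ⟨p.1, p.2, hp.1, hp.2, rfl⟩))
  choose! s hs using fun (p : K × K) (hp : p ∈ T) =>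
    finite_for_pattern (E := E) (hT p hp).1 hne
  refine ⟨T.biUnion s, fun β h1 h2 h3 h4 => ?_⟩
  obtain ⟨α, hg⟩ := exists_gpair h1 h3 h4
  obtain ⟨p, hp, hpe⟩ := hT' (β, α) ⟨hg, h2⟩
  obtain ⟨γ, hγ, hγ'⟩ := hs p hp β α hg ((hT p hp).2.trans' h2.symm') hpe
  exact ⟨γ, Finset.mem_biUnion.mpr ⟨p, hp, hγ⟩, hγ'⟩

end P16

theorem two_times_monogenic_generators_in_class_in_finitely_many_AEquiv_classes
    (A : Type*) [CommRing A] [IsDomain A] [IsIntegrallyClosed A] [Algebra.FiniteType ℤ A]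
    (L : Type*) [Field L] [CharZero L] [Algebra A L] [IsFractionRing A L]
    (K : Type*) [Field K] [Algebra L K] [FiniteDimensional L K]
    [Algebra A K] [IsScalarTower A L K]
    (hd : 3 ≤ Module.finrank L K) (γ0 : K) :
    ∃ s : Finset K, ∀ β : K, IsIntegral A β → LEquiv L K β γ0 →
      Algebra.adjoin L {β} = ⊤ →
      TimesMonogenic A K 2 (Algebra.adjoin A {β}) →
      ∃ γ ∈ s, AEquiv A K β γ := by
  have : Normal L (AlgebraicClosure K) := by
    have : Algebra.IsAlgebraic L (AlgebraicClosure K) := Algebra.IsAlgebraic.trans L K _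
    exact normal_iff.mpr fun x => ⟨Algebra.IsIntegral.isIntegral x, IsAlgClosed.splits _⟩
  let E := IntermediateField.normalClosure L K (AlgebraicClosure K)
  have hcard : Fintype.card (K →ₐ[L] E) = Module.finrank L K := by
    apply AlgHom.card_of_splits
    intro x
    exact IsNormalClosure.splits (F := L) (K := K) (L := E) x
  have : Nontrivial (K →ₐ[L] E) := Fintype.one_lt_card_iff_nontrivial.mp (by omega)
  obtain ⟨σ, τ, hne⟩ := exists_pair_ne (K →ₐ[L] E)
  let : Algebra A E := ((algebraMap L E).comp (algebraMap A L)).toAlgebra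
  have : IsScalarTower A L E := IsScalarTower.of_algebraMap_eq' rfl
  have : IsGalois L E := inferInstance
  exact main_aux hne γ0
end
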